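/- arXiv:1911.05966 — 3 statements merged into one kernel-verified Lean document; each statement's English description precedes it below -/
import Mathlib

section
/- Let N ≥ 1, 0 < s < 1, and 0 < α < 2. Then there exists a constant C > 0, depending only on N, s and α, such that for every stable solution u of (-Δ)^s u = e^u on ℝ^N one has ∫_{ℝ^N} e^{(2α+1)u(x)} η(x) dx ≤ C, where η(x) = (1+|x|²)^{-(N+2s)/2}. -/
/-!
The proof works with the double integral of the fractional Laplacian directly, and with compactly
supported test functions; no extension to the half-space is needed.

Put `P = e^{αu} D^{3M}` with `D` a Lipschitz cutoff of the ball `B(x₀, 1)` and `M = N + 2`. Testing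
the equation against `P²` symmetrizes the left side into the double integral of
`(u(x) - u(y)) (P(x)² - P(y)²) / |x - y|^{N+2s}`. As the logarithmic mean is at most the arithmetic
mean (`log_sub_mul_ge`), and `log P` is `αu` up to the cutoff, this integrand is at least
`θ (P(x) - P(y))² / |x - y|^{N+2s}` for any `θ < 2/α`, up to an error (`pointwise_main`). Stability
with test function `P` (`stable_continuous`) bounds `I = ∫ e^{(2α+1)u} D^{6M}` by the energy of `P`
times `c/2`, so that `θ I ≤ I + error`, and `α < 2` allows a choice `θ > 1`.

The error is a product of the weight `(1 + e^{2αu(x)}) D(x)^{5M}` and a kernel in `y` whose mass is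
bounded once `∫ e^u` is bounded on unit balls (`errL_bound`); that bound is stability tested with the
cutoff itself (`exp_ball_bound`). The weight is of lower order than the integrand of `I`, and
is absorbed by Young's inequality (`errW_young`). Everything is uniform in `x₀`, so `e^{(2α+1)u}` has
bounded mass on all unit balls (`local_bound`). Since `η` is integrable and varies by a bounded factor
over unit distances, averaging over the centres gives the claim (`lintegral_weight_le`).

The principal value is treated by truncating the kernel to `|z| > ε`: the `C^{2σ}` regularity makes
the truncated operators locally bounded uniformly in `ε` (`truncL_bound`), so the tested equation
passes to the limit by dominated convergence on one side and Fatou's lemma on the other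
(`tendsto_tested`, `energy_le`).
-/

open MeasureTheory Filter Set

noncomputable section

/-- Euclidean space `ℝ^N`. -/
abbrev ES (N : ℕ) := EuclideanSpace ℝ (Fin N)

/-- The normalization constant `c_{N,s}` of the fractional Laplacian. -/
def fracC (N : ℕ) (s : ℝ) : ℝ :=
  2 ^ (2 * s) * s * Real.Gamma ((N : ℝ) / 2 + s) /
    (Real.pi ^ ((N : ℝ) / 2) * Real.Gamma (1 - s))

/-- `HasFracLapAt N s u x v` means that the principal-value limit defining
`(-Δ)^s u (x)` exists and equals `v`:
`(-Δ)^s u (x) = c_{N,s} lim_{ε→0⁺} ∫_{ℝ^N ∖ B(x,ε)} (u x - u ξ)/|x-ξ|^{N+2s} dξ`. -/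
def HasFracLapAt (N : ℕ) (s : ℝ) (u : ES N → ℝ) (x : ES N) (v : ℝ) : Prop :=
  Filter.Tendsto
    (fun ε : ℝ => fracC N s *
      ∫ ξ in {ξ : ES N | ε < ‖x - ξ‖}, (u x - u ξ) / ‖x - ξ‖ ^ ((N : ℝ) + 2 * s))
    (nhdsWithin 0 (Set.Ioi 0)) (nhds v)

/-- The weight function `η(x) = (1+|x|²)^{-(N+2s)/2}`. -/
def fracEta (N : ℕ) (s : ℝ) (x : ES N) : ℝ :=
  (1 + ‖x‖ ^ 2) ^ (-(((N : ℝ) + 2 * s) / 2))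

/-- `ρ_m(x) = (1+|x|²)^{-m/2}`. -/
def fracRho (N : ℕ) (m : ℝ) (x : ES N) : ℝ :=
  (1 + ‖x‖ ^ 2) ^ (-(m / 2))

/-- Membership in `L_s(ℝ^N)`: locally integrable with
`∫ |u(x)|/(1+|x|)^{N+2s} dx < ∞`. -/
def MemLs (N : ℕ) (s : ℝ) (u : ES N → ℝ) : Prop :=
  MeasureTheory.LocallyIntegrable u volume ∧
    MeasureTheory.Integrable
      (fun x : ES N => |u x| / (1 + ‖x‖) ^ ((N : ℝ) + 2 * s)) volume

/-- Membership in the Hölder space `C^β(ℝ^N)` for `0 < β < 2`: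
Hölder continuity of exponent `β` if `β ≤ 1`, and a Hölder continuous
derivative of exponent `β - 1` if `β > 1`. -/
def MemCHolder {N : ℕ} (β : ℝ) (u : ES N → ℝ) : Prop :=
  (β ≤ 1 → ∃ C : NNReal, HolderWith C β.toNNReal u) ∧
  (1 < β → Differentiable ℝ u ∧
    ∃ C : NNReal, HolderWith C (β - 1).toNNReal (fderiv ℝ u))

/-- A solution of `(-Δ)^s u = e^u` on `ℝ^N`: a function
`u ∈ C^{2σ}(ℝ^N) ∩ L_s(ℝ^N)` for some `σ > s` satisfying the equation
pointwise. -/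
def IsSolution (N : ℕ) (s : ℝ) (u : ES N → ℝ) : Prop :=
  (∃ σ : ℝ, s < σ ∧ MemCHolder (2 * σ) u) ∧ MemLs N s u ∧
    ∀ x : ES N, HasFracLapAt N s u x (Real.exp (u x))

/-- Stability: `∫ e^u φ² ≤ (c_{N,s}/2) ∬ (φ(x)-φ(y))²/|x-y|^{N+2s}` for all
`φ ∈ C¹_c(ℝ^N)`. -/
def IsStable (N : ℕ) (s : ℝ) (u : ES N → ℝ) : Prop :=
  ∀ φ : ES N → ℝ, ContDiff ℝ 1 φ → HasCompactSupport φ →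
    ∫ x : ES N, Real.exp (u x) * φ x ^ 2 ≤
      fracC N s / 2 *
        ∫ x : ES N, ∫ y : ES N, (φ x - φ y) ^ 2 / ‖x - y‖ ^ ((N : ℝ) + 2 * s)

/-- Surface area `|S^{N-1}| = 2 π^{N/2} / Γ(N/2)` of the unit sphere in `ℝ^N`. -/
def sphArea (N : ℕ) : ℝ :=
  2 * Real.pi ^ ((N : ℝ) / 2) / Real.Gamma ((N : ℝ) / 2)

/-- The normalization constant `p(N,s)` of the Poisson kernel. -/
def poissonC (N : ℕ) (s : ℝ) : ℝ :=
  Real.Gamma (((N : ℝ) + 2 * s) / 2) / (Real.pi ^ ((N : ℝ) / 2) * Real.Gamma s)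

/-- The Poisson kernel `P_s(x,t) = p(N,s) t^{2s} / (|x|²+t²)^{(N+2s)/2}`. -/
def poissonKer (N : ℕ) (s : ℝ) (x : ES N) (t : ℝ) : ℝ :=
  poissonC N s * t ^ (2 * s) / (‖x‖ ^ 2 + t ^ 2) ^ (((N : ℝ) + 2 * s) / 2)

/-- The Caffarelli–Silvestre extension `U(x,t) = ∫ P_s(x-z,t) u(z) dz`. -/
def csExtension (N : ℕ) (s : ℝ) (u : ES N → ℝ) (x : ES N) (t : ℝ) : ℝ :=
  ∫ z : ES N, poissonKer N s (x - z) t * u z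

/-- `ζ(x,t) = (1+|x|²+t²)^{-(N+2s)/4}`. -/
def csZeta (N : ℕ) (s : ℝ) (x : ES N) (t : ℝ) : ℝ :=
  (1 + ‖x‖ ^ 2 + t ^ 2) ^ (-(((N : ℝ) + 2 * s) / 4))

/-- The squared (full) gradient `|∇F|²(x,t) = |∇_x F|² + |∂_t F|²` of a
function `F` on `ℝ^N × ℝ`. -/
def gradSqr (N : ℕ) (F : ES N → ℝ → ℝ) (x : ES N) (t : ℝ) : ℝ :=
  ‖fderiv ℝ (fun y => F y t) x‖ ^ 2 + (deriv (F x) t) ^ 2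

/-! ### The pointwise inequality -/

/-- The logarithmic mean `(P - Q)/(log P - log Q)` is at most the arithmetic mean `(P + Q)/2`. -/
lemma log_sub_mul_ge {P Q : ℝ} (hP : 0 < P) (hQ : 0 < Q) :
    2 * (P - Q) ^ 2 ≤ (Real.log P - Real.log Q) * (P ^ 2 - Q ^ 2) := by
  wlog h : Q ≤ P generalizing P Q
  · have := this hQ hP (le_of_not_ge h)
    nlinarith
  have h1 := Real.le_log_one_add_of_nonneg (x := P / Q - 1)
    (by rw [sub_nonneg, le_div_iff₀ hQ]; linarith)
  rw [add_sub_cancel, Real.log_div hP.ne' hQ.ne'] at h1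
  have h2 : 2 * (P / Q - 1) / (P / Q - 1 + 2) = 2 * (P - Q) / (P + Q) := by
    have : P / Q - 1 + 2 = (P + Q) / Q := by field_simp; ring
    rw [this]; field_simp
  rw [h2, div_le_iff₀ (by positivity)] at h1
  nlinarith [mul_le_mul_of_nonneg_right h1 (sub_nonneg.2 h)]

/-- Crude lower bound for the symmetrized integrand, with no smallness of `P - Q` required:
`b - a` is at most `e^b + a⁻`. -/
lemma pointwise_far (a b P Q : ℝ) :
    -((Real.exp b + max 0 (-a)) * P ^ 2 + (Real.exp a + max 0 (-b)) * Q ^ 2) ≤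
      (a - b) * (P ^ 2 - Q ^ 2) := by
  have hb := Real.add_one_le_exp b
  have ha := Real.add_one_le_exp a
  have h1 : b - a ≤ Real.exp b + max 0 (-a) := by
    have := le_max_right 0 (-a); linarith
  have h2 : a - b ≤ Real.exp a + max 0 (-b) := by
    have := le_max_right 0 (-b); linarith
  have k1 := mul_le_mul_of_nonneg_right h1 (sq_nonneg P)
  have k2 := mul_le_mul_of_nonneg_right h2 (sq_nonneg Q)
  nlinarith

/-- The logarithmic mean inequality for `P = e^{αa} p`, `Q = e^{αb} q`. Since
`log P - log Q = α(a - b) + (log p - log q)`, the cutoff enters only through `log p - log q`, and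
that term is absorbed at the cost of lowering the constant `2` to `2 - δ`. -/
lemma pointwise_near {a b α δ p q : ℝ} (hα : 0 < α) (hδ : 0 < δ) (hp : 0 < p) (hq : 0 < q) :
    (2 - δ) / α * (Real.exp (α * a) * p - Real.exp (α * b) * q) ^ 2 ≤
      (a - b) * ((Real.exp (α * a) * p) ^ 2 - (Real.exp (α * b) * q) ^ 2) +
      1 / (2 * α * δ) * (Real.log p - Real.log q) ^ 2 *
        ((Real.exp (α * a) * p) ^ 2 + (Real.exp (α * b) * q) ^ 2) := by
  set P := Real.exp (α * a) * p with hPdef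
  set Q := Real.exp (α * b) * q with hQdef
  have hP : 0 < P := by positivity
  have hQ : 0 < Q := by positivity
  have hl := log_sub_mul_ge hP hQ
  have e1 : Real.log P = α * a + Real.log p := by
    rw [hPdef, Real.log_mul (Real.exp_pos _).ne' hp.ne', Real.log_exp]
  have e2 : Real.log Q = α * b + Real.log q := by
    rw [hQdef, Real.log_mul (Real.exp_pos _).ne' hq.ne', Real.log_exp]
  rw [e1, e2] at hl
  set h := Real.log p - Real.log q with hh
  have h3 : h * ((P - Q) * (P + Q)) ≤ δ * (P - Q) ^ 2 + h ^ 2 * (P + Q) ^ 2 / (4 * δ) := by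
    have : δ * (P - Q) ^ 2 + h ^ 2 * (P + Q) ^ 2 / (4 * δ) - h * ((P - Q) * (P + Q))
        = (2 * δ * (P - Q) - h * (P + Q)) ^ 2 / (4 * δ) := by field_simp; ring
    have h0 : 0 ≤ (2 * δ * (P - Q) - h * (P + Q)) ^ 2 / (4 * δ) := by positivity
    linarith
  have h4 : h ^ 2 * (P + Q) ^ 2 / (4 * δ) ≤ h ^ 2 * (P ^ 2 + Q ^ 2) / (2 * δ) := by
    rw [div_le_div_iff₀ (by positivity) (by positivity)]
    have : (P + Q) ^ 2 ≤ 2 * (P ^ 2 + Q ^ 2) := by nlinarith [sq_nonneg (P - Q)]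
    have h5 := mul_le_mul_of_nonneg_left this (by positivity : 0 ≤ h ^ 2 * (2 * δ))
    nlinarith
  have h5 : (2 - δ) * (P - Q) ^ 2 ≤ α * ((a - b) * (P ^ 2 - Q ^ 2)) +
      h ^ 2 * (P ^ 2 + Q ^ 2) / (2 * δ) := by nlinarith
  have h6 : (2 - δ) / α * (P - Q) ^ 2 = ((2 - δ) * (P - Q) ^ 2) / α := by ring
  rw [h6, div_le_iff₀ hα]
  refine h5.trans (le_of_eq ?_)
  field_simp

lemma abs_log_sub_log_le {d e c : ℝ} (hc : 0 < c) (hd : c ≤ d) (he : c ≤ e) :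
    |Real.log d - Real.log e| ≤ |d - e| / c := by
  wlog h : e ≤ d generalizing d e
  · rw [abs_sub_comm, abs_sub_comm d]; exact this he hd (le_of_not_ge h)
  have hd0 : 0 < d := by linarith
  have he0 : 0 < e := by linarith
  have h1 := Real.log_le_sub_one_of_pos (div_pos hd0 he0)
  rw [Real.log_div hd0.ne' he0.ne'] at h1
  have h2 := Real.log_le_log he0 h
  rw [abs_of_nonneg (by linarith), abs_of_nonneg (by linarith)]
  refine h1.trans ?_
  have : d / e - 1 = (d - e) / e := by field_simp
  rw [this]
  gcongr

/-- If two numbers differ by at most half of one of them, their logarithms are close. -/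
lemma log_ratio_near {d e t : ℝ} (ht : 0 < t) (hde : |d - e| ≤ t)
    (h : t ≤ d / 2 ∨ t ≤ e / 2) :
    0 < d ∧ 0 < e ∧ (Real.log d - Real.log e) ^ 2 * d ^ 2 ≤ 4 * t ^ 2 ∧
      (Real.log d - Real.log e) ^ 2 * e ^ 2 ≤ 4 * t ^ 2 := by
  obtain ⟨h1, h2⟩ := abs_le.1 hde
  have hd2 : d / 2 ≤ e := by rcases h with h | h <;> linarith
  have he2 : e / 2 ≤ d := by rcases h with h | h <;> linarith
  have hd0 : 0 < d := by rcases h with h | h <;> linarith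
  have he0 : 0 < e := by linarith
  have k1 := abs_log_sub_log_le (d := d) (e := e) (half_pos hd0) (by linarith) hd2
  have k2 := abs_log_sub_log_le (d := d) (e := e) (half_pos he0) he2 (by linarith)
  rw [le_div_iff₀ (by positivity)] at k1 k2
  refine ⟨hd0, he0, ?_, ?_⟩
  · have : |Real.log d - Real.log e| * d ≤ 2 * t := by linarith
    calc _ = (|Real.log d - Real.log e| * d) ^ 2 := by rw [mul_pow, sq_abs]
      _ ≤ (2 * t) ^ 2 := by gcongr
      _ = _ := by ring
  · have : |Real.log d - Real.log e| * e ≤ 2 * t := by linarith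
    calc _ = (|Real.log d - Real.log e| * e) ^ 2 := by rw [mul_pow, sq_abs]
      _ ≤ (2 * t) ^ 2 := by gcongr
      _ = _ := by ring

lemma neg_part_mul_exp_le {α : ℝ} (hα : 0 < α) (a : ℝ) :
    max 0 (-a) * Real.exp (2 * α * a) ≤ 1 / (2 * α) := by
  rcases le_or_gt 0 a with h | h
  · rw [max_eq_left (by linarith), zero_mul]; positivity
  · rw [max_eq_right (by linarith)]
    have h1 := Real.add_one_le_exp (-(2 * α * a))
    have h2 : Real.exp (-(2 * α * a)) * Real.exp (2 * α * a) = 1 := by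
      rw [← Real.exp_add]; simp
    rw [le_div_iff₀ (by positivity)]
    have h3 := mul_le_mul_of_nonneg_right (by linarith : -(2 * α * a) ≤ Real.exp (-(2 * α * a)))
      (Real.exp_pos (2 * α * a)).le
    nlinarith

/-- Size of the error at a point where `u = a` and the cutoff is `d`. The power `5M` is smaller
than the `6M` carried by the main term, so that the remaining `M` powers of `d` can offset the
singularity `t^{-p}` when `d ≤ 2t`. -/
def errW (α : ℝ) (M : ℕ) (a d : ℝ) : ℝ := (1 + Real.exp (2 * α * a)) * d ^ (5 * M)

/-- Interaction of the error with a point at distance `t` where `u = b`; as a function of the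
second point this is integrable as soon as `e^u` has bounded mass on unit balls. -/
def errL (p t b : ℝ) : ℝ := min 1 (t ^ 2) / t ^ p + (1 + t) ^ (-p) * (1 + Real.exp b)

lemma errW_nonneg {α : ℝ} {M : ℕ} {a d : ℝ} (hd : 0 ≤ d) : 0 ≤ errW α M a d := by
  unfold errW; positivity

lemma errL_nonneg {p t b : ℝ} (ht : 0 ≤ t) : 0 ≤ errL p t b := by
  unfold errL
  have : 0 ≤ min 1 (t ^ 2) := le_min zero_le_one (sq_nonneg t)
  positivity

/-- Where the cutoff `d` is at most twice the distance `t`, the surplus factor `d^M` turns the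
singular kernel `t^{-p}` into `(1 + t)^{-p}`. -/
lemma far_term {α θ p a b d t : ℝ} {M : ℕ} (hα : 0 < α) (hθ : 0 ≤ θ) (hd : 0 ≤ d) (hd1 : d ≤ 1)
    (hp : 0 < p) (hpM : p ≤ M) (ht : 0 < t) (hdt : d / 2 ≤ t) :
    (θ + Real.exp b + max 0 (-a)) * (Real.exp (α * a) * d ^ (3 * M)) ^ 2 / t ^ p ≤
      4 ^ p * (θ + 1 + 1 / (2 * α)) * (errW α M a d * errL p t b) := by
  have hexp : Real.exp (α * a) ^ 2 = Real.exp (2 * α * a) := by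
    rw [← Real.exp_nat_mul]; congr 1; push_cast; ring
  have h1 : (θ + Real.exp b + max 0 (-a)) * Real.exp (2 * α * a) ≤
      (θ + 1 + 1 / (2 * α)) * ((1 + Real.exp (2 * α * a)) * (1 + Real.exp b)) := by
    have := neg_part_mul_exp_le hα a
    have e1 := Real.exp_pos (2 * α * a)
    have e2 := Real.exp_pos b
    have e3 : 0 < 1 / (2 * α) := by positivity
    set X := Real.exp (2 * α * a)
    set Y := Real.exp b
    set Z := 1 / (2 * α)
    have : (θ + 1 + Z) * ((1 + X) * (1 + Y)) - (θ + Y) * X - Z =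
       θ * (1 + Y + X * Y) + (1 + X + Y) + Z * (X + Y + X * Y) := by ring
    have h0 : 0 ≤ θ * (1 + Y + X * Y) + (1 + X + Y) + Z * (X + Y + X * Y) := by positivity
    nlinarith
  have h2 : d ^ M / t ^ p ≤ 4 ^ p * (1 + t) ^ (-p) := by
    rw [Real.rpow_neg (by positivity), ← div_eq_mul_inv, div_le_div_iff₀ (by positivity)
      (by positivity)]
    rcases hd.eq_or_lt with rfl | hd0
    · have : (M : ℝ) ≠ 0 := by intro h; linarith
      rw [zero_pow (by exact_mod_cast this), zero_mul]; positivity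
    calc d ^ M * (1 + t) ^ p ≤ d ^ p * (1 + t) ^ p := by
          gcongr
          rw [← Real.rpow_natCast]
          exact Real.rpow_le_rpow_of_exponent_ge hd0 hd1 hpM
      _ = (d * (1 + t)) ^ p := (Real.mul_rpow hd (by positivity)).symm
      _ ≤ (4 * t) ^ p := by
          apply Real.rpow_le_rpow (by positivity) _ hp.le
          nlinarith
      _ = _ := Real.mul_rpow (by norm_num) ht.le
  have h3 : (1 + t) ^ (-p) * (1 + Real.exp b) ≤ errL p t b := by
    unfold errL
    have : 0 ≤ min 1 (t ^ 2) / t ^ p :=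
      div_nonneg (le_min zero_le_one (sq_nonneg t)) (by positivity)
    linarith
  calc _ = ((θ + Real.exp b + max 0 (-a)) * Real.exp (2 * α * a)) * d ^ (5 * M) * (d ^ M / t ^ p) := by
        rw [mul_pow, hexp, ← pow_mul]
        have : d ^ (3 * M * 2) = d ^ (5 * M) * d ^ M := by rw [← pow_add]; congr 1; ring
        rw [this]; ring
    _ ≤ ((θ + 1 + 1 / (2 * α)) * ((1 + Real.exp (2 * α * a)) * (1 + Real.exp b))) * d ^ (5 * M) *
          (4 ^ p * (1 + t) ^ (-p)) := by
        gcongr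
    _ = 4 ^ p * (θ + 1 + 1 / (2 * α)) * (errW α M a d * ((1 + t) ^ (-p) * (1 + Real.exp b))) := by
        unfold errW; ring
    _ ≤ _ := by
        gcongr
        exact errW_nonneg hd

/-- Where the logarithms of the cutoffs differ by `O(t/d)`, the error kernel gains `t^2`. -/
lemma near_term {α p a b d e t : ℝ} {M : ℕ} (hM : 2 ≤ M) (hd : 0 < d) (hd1 : d ≤ 1)
    (ht : 0 < t) (ht1 : t ≤ 1) (h : (Real.log d - Real.log e) ^ 2 * d ^ 2 ≤ 4 * t ^ 2) :
    (Real.log (d ^ (3 * M)) - Real.log (e ^ (3 * M))) ^ 2 * (Real.exp (α * a) * d ^ (3 * M)) ^ 2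
      / t ^ p ≤ 36 * (M : ℝ) ^ 2 * (errW α M a d * errL p t b) := by
  have hexp : Real.exp (α * a) ^ 2 = Real.exp (2 * α * a) := by
    rw [← Real.exp_nat_mul]; congr 1; push_cast; ring
  have h3 : t ^ 2 / t ^ p ≤ errL p t b := by
    unfold errL
    rw [min_eq_right (by nlinarith)]
    have : 0 ≤ (1 + t) ^ (-p) * (1 + Real.exp b) := by positivity
    linarith
  have h4 : d ^ (6 * M) ≤ d ^ 2 * d ^ (5 * M) := by
    rw [← pow_add]
    exact pow_le_pow_of_le_one hd.le hd1 (by omega)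
  calc _ = 9 * (M : ℝ) ^ 2 * (Real.log d - Real.log e) ^ 2 * Real.exp (2 * α * a) *
        d ^ (6 * M) / t ^ p := by
        rw [mul_pow, hexp, ← pow_mul, Real.log_pow, Real.log_pow]
        have : 3 * M * 2 = 6 * M := by ring
        rw [this]; push_cast; ring
    _ ≤ 9 * (M : ℝ) ^ 2 * (Real.log d - Real.log e) ^ 2 * Real.exp (2 * α * a) *
        (d ^ 2 * d ^ (5 * M)) / t ^ p := by gcongr
    _ = 9 * (M : ℝ) ^ 2 * (((Real.log d - Real.log e) ^ 2 * d ^ 2) * (Real.exp (2 * α * a) *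
        d ^ (5 * M))) / t ^ p := by ring
    _ ≤ 9 * (M : ℝ) ^ 2 * ((4 * t ^ 2) * ((1 + Real.exp (2 * α * a)) * d ^ (5 * M))) / t ^ p := by
        gcongr
        linarith
    _ = 36 * (M : ℝ) ^ 2 * (errW α M a d * (t ^ 2 / t ^ p)) := by unfold errW; ring
    _ ≤ _ := by
        gcongr
        exact errW_nonneg hd.le

/-- The pointwise inequality behind the whole argument: with `P = exp(αa) d^{3M}`,
`Q = exp(αb) e^{3M}`, the energy density of `P` is dominated, with a constant as close to `2/α` as
desired, by the integrand of the equation tested against `P^2`, up to an error that factorizes. -/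
lemma pointwise_main {α δ p : ℝ} {M : ℕ} (hα : 0 < α) (hδ : 0 < δ) (hδ2 : δ < 2) (hp : 0 < p)
    (hpM : p ≤ M) (hM : 2 ≤ M) : ∃ C : ℝ, 0 < C ∧ ∀ a b d e t : ℝ, 0 ≤ d → d ≤ 1 → 0 ≤ e →
    e ≤ 1 → 0 < t → |d - e| ≤ t →
    (2 - δ) / α * ((Real.exp (α * a) * d ^ (3 * M) - Real.exp (α * b) * e ^ (3 * M)) ^ 2 / t ^ p) ≤
      (a - b) * ((Real.exp (α * a) * d ^ (3 * M)) ^ 2 - (Real.exp (α * b) * e ^ (3 * M)) ^ 2) / t ^ p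
      + C * (errW α M a d * errL p t b + errW α M b e * errL p t a) := by
  have hθ : 0 ≤ (2 - δ) / α := div_nonneg (by linarith) hα.le
  set θ := (2 - δ) / α with hθd
  refine ⟨4 ^ p * (θ + 1 + 1 / (2 * α)) + 1 / (2 * α * δ) * (36 * (M : ℝ) ^ 2), by positivity, ?_⟩
  intro a b d e t hd hd1 he he1 ht hde
  have ht' : 0 < t ^ p := by positivity
  have hw : 0 ≤ errW α M a d * errL p t b + errW α M b e * errL p t a :=
    add_nonneg (mul_nonneg (errW_nonneg hd) (errL_nonneg ht.le))
      (mul_nonneg (errW_nonneg he) (errL_nonneg ht.le))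
  set P := Real.exp (α * a) * d ^ (3 * M) with hPdef
  set Q := Real.exp (α * b) * e ^ (3 * M) with hQdef
  -- if both cutoffs are at most `2 * t` the crude bound suffices; otherwise `d` and `e` are comparable
  by_cases h : t ≤ d / 2 ∨ t ≤ e / 2
  · obtain ⟨hd0, he0, k1, k2⟩ := log_ratio_near ht hde h
    have ht1 : t ≤ 1 := by rcases h with h | h <;> linarith
    have n1 := near_term (α := α) (p := p) (a := a) (b := b) (e := e) hM hd0 hd1 ht ht1 k1
    have n2 := near_term (α := α) (p := p) (a := b) (b := a) (d := e) (e := d) hM he0 he1 ht ht1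
      (by rw [← neg_sub, neg_sq]; exact k2)
    have main := pointwise_near (a := a) (b := b) hα hδ (pow_pos hd0 (3 * M)) (pow_pos he0 (3 * M))
    rw [← hPdef, ← hQdef, ← hθd] at main
    rw [← hPdef] at n1
    rw [← hQdef, ← neg_sub, neg_sq] at n2
    set h := Real.log (d ^ (3 * M)) - Real.log (e ^ (3 * M)) with hh
    have m2 := div_le_div_of_nonneg_right main ht'.le
    have e1 : 0 ≤ 4 ^ p * (θ + 1 + 1 / (2 * α)) *
      (errW α M a d * errL p t b + errW α M b e * errL p t a) := by positivity
    have e2 := mul_le_mul_of_nonneg_left (add_le_add n1 n2)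
      (by positivity : 0 ≤ 1 / (2 * α * δ))
    calc θ * ((P - Q) ^ 2 / t ^ p) = θ * (P - Q) ^ 2 / t ^ p := by ring
      _ ≤ _ := m2
      _ = (a - b) * (P ^ 2 - Q ^ 2) / t ^ p +
          1 / (2 * α * δ) * (h ^ 2 * P ^ 2 / t ^ p + h ^ 2 * Q ^ 2 / t ^ p) := by ring
      _ ≤ _ := by linarith
  · push Not at h
    have f1 := far_term (θ := θ) (a := a) (b := b) hα hθ hd hd1 hp hpM ht h.1.le
    have f2 := far_term (θ := θ) (a := b) (b := a) hα hθ he he1 hp hpM ht h.2.le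
    rw [← hPdef] at f1
    rw [← hQdef] at f2
    have main : θ * (P - Q) ^ 2 ≤ (a - b) * (P ^ 2 - Q ^ 2) +
        ((θ + Real.exp b + max 0 (-a)) * P ^ 2 + (θ + Real.exp a + max 0 (-b)) * Q ^ 2) := by
      have := pointwise_far a b P Q
      have hPQ : 0 ≤ P * Q := by positivity
      nlinarith [mul_nonneg hθ hPQ]
    have m2 := div_le_div_of_nonneg_right main ht'.le
    have e1 : 0 ≤ 1 / (2 * α * δ) * (36 * (M : ℝ) ^ 2) *
      (errW α M a d * errL p t b + errW α M b e * errL p t a) := by positivity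
    calc θ * ((P - Q) ^ 2 / t ^ p) = θ * (P - Q) ^ 2 / t ^ p := by ring
      _ ≤ _ := m2
      _ = (a - b) * (P ^ 2 - Q ^ 2) / t ^ p +
          ((θ + Real.exp b + max 0 (-a)) * P ^ 2 / t ^ p +
           (θ + Real.exp a + max 0 (-b)) * Q ^ 2 / t ^ p) := by ring
      _ ≤ _ := by linarith

/-! ### Gagliardo seminorm and stability for continuous test functions -/

/-- No integrability is needed: the Bochner integral is `0` when it is undefined. -/
lemma ofReal_integral_le {X : Type*} [MeasurableSpace X] {μ : Measure X} {f : X → ℝ}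
    (hf : ∀ x, 0 ≤ f x) : ENNReal.ofReal (∫ x, f x ∂μ) ≤ ∫⁻ x, ENNReal.ofReal (f x) ∂μ := by
  have := enorm_integral_le_lintegral_enorm (μ := μ) f
  rw [Real.enorm_of_nonneg (integral_nonneg hf)] at this
  refine this.trans (lintegral_mono fun x => ?_)
  rw [Real.enorm_of_nonneg (hf x)]

lemma integrable_kernel {N : ℕ} (hN : 1 ≤ N) {s β : ℝ} (hs : 0 < s) (hβ : 2 * s < β) :
    Integrable (fun z : ES N => min 1 (‖z‖ ^ β) / ‖z‖ ^ ((N : ℝ) + 2 * s)) := by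
  have : Nontrivial (ES N) := by
    have : Nonempty (Fin N) := ⟨⟨0, hN⟩⟩
    infer_instance
  have := (integrable_fun_norm_addHaar (E := ES N) volume
    (f := fun r : ℝ => min 1 (r ^ β) / r ^ ((N : ℝ) + 2 * s))).2
  apply this
  have hfr : Module.finrank ℝ (ES N) - 1 = N - 1 := by simp
  rw [hfr, ← Ioc_union_Ioi_eq_Ioi (zero_le_one' ℝ)]
  have hcast : ((N - 1 : ℕ) : ℝ) = (N : ℝ) - 1 := by push_cast [hN]; ring
  refine IntegrableOn.union ?_ ?_
  · have h1 : IntegrableOn (fun y : ℝ => y ^ (β - 1 - 2 * s)) (Ioc 0 1) :=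
      (intervalIntegrable_iff_integrableOn_Ioc_of_le zero_le_one).1
        (intervalIntegral.intervalIntegrable_rpow' (by linarith))
    refine h1.congr_fun ?_ measurableSet_Ioc
    intro y hy
    have hy0 : 0 < y := hy.1
    have : min 1 (y ^ β) = y ^ β :=
      min_eq_right (Real.rpow_le_one hy0.le hy.2 (by linarith))
    simp only [smul_eq_mul, this]
    rw [← Real.rpow_natCast, hcast, ← Real.rpow_sub hy0, ← Real.rpow_add hy0]
    congr 1; ring
  · have h1 : IntegrableOn (fun y : ℝ => y ^ (-1 - 2 * s)) (Ioi 1) :=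
      integrableOn_Ioi_rpow_of_lt (by linarith) one_pos
    refine h1.congr_fun ?_ measurableSet_Ioi
    intro y hy
    have hy1 : 1 < y := hy
    have hy0 : 0 < y := by linarith
    have : min 1 (y ^ β) = 1 :=
      min_eq_left (Real.one_le_rpow hy1.le (by linarith))
    simp only [smul_eq_mul, this, one_div]
    rw [← Real.rpow_natCast, hcast, ← Real.rpow_neg hy0.le, ← Real.rpow_add hy0]
    congr 1; ring

lemma integrable_japanese {N : ℕ} {s : ℝ} (hs : 0 < s) :
    Integrable (fun z : ES N => (1 + ‖z‖) ^ (-((N : ℝ) + 2 * s))) := by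
  apply integrable_one_add_norm
  simp; linarith

lemma integrable_fracEta {N : ℕ} {s : ℝ} (hs : 0 < s) : Integrable (fracEta N s) := by
  have := integrable_rpow_neg_one_add_norm_sq (E := ES N) (μ := volume) (r := (N : ℝ) + 2 * s)
    (by simp; linarith)
  convert this using 3
  unfold fracEta
  congr 1; ring

/-- The squared Gagliardo seminorm `∬ (φ x - φ y)^2 / |x - y|^{N+2s}`, with values in `[0, ∞]`, so
that no finiteness has to be known in advance. -/
def gagE (N : ℕ) (s : ℝ) (φ : ES N → ℝ) : ENNReal :=
  ∫⁻ x : ES N, ∫⁻ y : ES N, ENNReal.ofReal ((φ x - φ y) ^ 2 / ‖x - y‖ ^ ((N : ℝ) + 2 * s))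

/-- Jensen's inequality for the square and a probability density `ρ`. -/
lemma sq_integral_le {X : Type*} [MeasurableSpace X] {μ : Measure X} {ρ g : X → ℝ}
    (h0 : ∀ x, 0 ≤ ρ x) (h1 : ∫ x, ρ x ∂μ = 1) (hρ : Integrable ρ μ)
    (hg : Integrable (fun x => ρ x * g x) μ) (hg2 : Integrable (fun x => ρ x * g x ^ 2) μ) :
    (∫ x, ρ x * g x ∂μ) ^ 2 ≤ ∫ x, ρ x * g x ^ 2 ∂μ := by
  set c := ∫ x, ρ x * g x ∂μ with hc
  have h : 0 ≤ ∫ x, ρ x * (g x - c) ^ 2 ∂μ :=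
    integral_nonneg fun x => mul_nonneg (h0 x) (sq_nonneg _)
  have e : (fun x => ρ x * (g x - c) ^ 2) =
      fun x => (ρ x * g x ^ 2 - 2 * c * (ρ x * g x)) + c ^ 2 * ρ x := by
    funext x; ring
  have i1 : Integrable (fun x => ρ x * g x ^ 2 - 2 * c * (ρ x * g x)) μ :=
    hg2.sub (hg.const_mul (2 * c))
  rw [e, integral_add i1 (hρ.const_mul _),
    integral_sub hg2 (hg.const_mul _), integral_const_mul, integral_const_mul, h1, ← hc] at h
  nlinarith

/-- Mollification does not increase the Gagliardo seminorm, by Jensen's inequality and translation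
invariance. -/
lemma gagE_convolution_le {N : ℕ} {s : ℝ} {ρ φ : ES N → ℝ} (h0 : ∀ x, 0 ≤ ρ x)
    (h1 : ∫ x, ρ x = 1) (hρ : Continuous ρ) (hρc : HasCompactSupport ρ) (hφ : Continuous φ) :
    gagE N s (fun x => ∫ t, ρ t * φ (x - t)) ≤ gagE N s φ := by
  have hIntg : ∀ g : ES N → ℝ, Continuous g → Integrable (fun t => ρ t * g t) := by
    intro g hg
    exact (hρ.mul hg).integrable_of_hasCompactSupport hρc.mul_right
  have hρi : Integrable ρ := hρ.integrable_of_hasCompactSupport hρc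
  have step : ∀ x y : ES N,
      ENNReal.ofReal (((∫ t, ρ t * φ (x - t)) - ∫ t, ρ t * φ (y - t)) ^ 2 /
        ‖x - y‖ ^ ((N : ℝ) + 2 * s)) ≤
      ∫⁻ t, ENNReal.ofReal (ρ t) * ENNReal.ofReal ((φ (x - t) - φ (y - t)) ^ 2 /
        ‖(x - t) - (y - t)‖ ^ ((N : ℝ) + 2 * s)) := by
    intro x y
    have c1 : Continuous fun t => φ (x - t) := by fun_prop
    have c2 : Continuous fun t => φ (y - t) := by fun_prop
    rw [← integral_sub (hIntg _ c1) (hIntg _ c2)]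
    simp_rw [← mul_sub, sub_sub_sub_cancel_right]
    have hd : Integrable fun t => ρ t * (φ (x - t) - φ (y - t)) ^ 2 := hIntg _ (by fun_prop)
    have h := sq_integral_le (g := fun t => φ (x - t) - φ (y - t)) h0 h1 hρi
      (hIntg _ (c1.sub c2)) hd
    calc _ ≤ ENNReal.ofReal ((∫ t, ρ t * (φ (x - t) - φ (y - t)) ^ 2) /
            ‖x - y‖ ^ ((N : ℝ) + 2 * s)) := by
          apply ENNReal.ofReal_le_ofReal
          gcongr
      _ = ∫⁻ t, ENNReal.ofReal (ρ t * (φ (x - t) - φ (y - t)) ^ 2 /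
            ‖x - y‖ ^ ((N : ℝ) + 2 * s)) := by
          rw [← integral_div]
          rw [ofReal_integral_eq_lintegral_ofReal (hd.div_const _)]
          exact Eventually.of_forall fun t => div_nonneg (mul_nonneg (h0 t) (sq_nonneg _))
            (by positivity)
      _ = _ := by
          congr 1; funext t
          rw [← ENNReal.ofReal_mul (h0 t), mul_div_assoc]
  have hm : Measurable fun q : ES N × ES N =>
      ENNReal.ofReal ((φ q.1 - φ q.2) ^ 2 / ‖q.1 - q.2‖ ^ ((N : ℝ) + 2 * s)) := by
    have := hφ.measurable
    fun_prop
  have hm3 : Measurable fun q : (ES N × ES N) × ES N =>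
      ENNReal.ofReal (ρ q.2) * ENNReal.ofReal ((φ (q.1.1 - q.2) - φ (q.1.2 - q.2)) ^ 2 /
        ‖(q.1.1 - q.2) - (q.1.2 - q.2)‖ ^ ((N : ℝ) + 2 * s)) := by
    have := hφ.measurable
    have := hρ.measurable
    fun_prop
  unfold gagE
  calc _ ≤ ∫⁻ x : ES N, ∫⁻ y : ES N, ∫⁻ t : ES N, ENNReal.ofReal (ρ t) *
        ENNReal.ofReal ((φ (x - t) - φ (y - t)) ^ 2 /
        ‖(x - t) - (y - t)‖ ^ ((N : ℝ) + 2 * s)) :=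
        lintegral_mono fun x => lintegral_mono fun y => step x y
    _ = ∫⁻ t : ES N, ∫⁻ x : ES N, ∫⁻ y : ES N, ENNReal.ofReal (ρ t) *
        ENNReal.ofReal ((φ (x - t) - φ (y - t)) ^ 2 /
        ‖(x - t) - (y - t)‖ ^ ((N : ℝ) + 2 * s)) := by
        have sw : ∀ x : ES N, ∫⁻ y : ES N, ∫⁻ t : ES N, ENNReal.ofReal (ρ t) *
            ENNReal.ofReal ((φ (x - t) - φ (y - t)) ^ 2 /
            ‖(x - t) - (y - t)‖ ^ ((N : ℝ) + 2 * s)) = ∫⁻ t : ES N, ∫⁻ y : ES N,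
            ENNReal.ofReal (ρ t) * ENNReal.ofReal ((φ (x - t) - φ (y - t)) ^ 2 /
            ‖(x - t) - (y - t)‖ ^ ((N : ℝ) + 2 * s)) := fun x => lintegral_lintegral_swap
          (hm3.comp (f := fun p : ES N × ES N => ((x, p.1), p.2)) (by fun_prop)).aemeasurable
        simp_rw [sw]
        rw [lintegral_lintegral_swap]
        apply Measurable.aemeasurable
        exact Measurable.lintegral_prod_right'
          (f := fun q : (ES N × ES N) × ES N => ENNReal.ofReal (ρ q.1.2) *
           ENNReal.ofReal ((φ (q.1.1 - q.1.2) - φ (q.2 - q.1.2)) ^ 2 /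
          ‖(q.1.1 - q.1.2) - (q.2 - q.1.2)‖ ^ ((N : ℝ) + 2 * s)))
          (hm3.comp (f := fun p : (ES N × ES N) × ES N => ((p.1.1, p.2), p.1.2)) (by fun_prop))
    _ = ∫⁻ t : ES N, ENNReal.ofReal (ρ t) * ∫⁻ x : ES N, ∫⁻ y : ES N,
        ENNReal.ofReal ((φ x - φ y) ^ 2 / ‖x - y‖ ^ ((N : ℝ) + 2 * s)) := by
        congr 1; funext t
        have i1 : ∀ x : ES N, ∫⁻ y : ES N, ENNReal.ofReal (ρ t) *
            ENNReal.ofReal ((φ (x - t) - φ (y - t)) ^ 2 /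
            ‖(x - t) - (y - t)‖ ^ ((N : ℝ) + 2 * s)) = ENNReal.ofReal (ρ t) *
            ∫⁻ y : ES N, ENNReal.ofReal ((φ (x - t) - φ y) ^ 2 /
              ‖(x - t) - y‖ ^ ((N : ℝ) + 2 * s)) := by
          intro x
          rw [lintegral_const_mul' _ _ ENNReal.ofReal_ne_top]
          congr 1
          exact lintegral_sub_right_eq_self (fun y => ENNReal.ofReal ((φ (x - t) - φ y) ^ 2 /
              ‖(x - t) - y‖ ^ ((N : ℝ) + 2 * s))) t
        simp_rw [i1]
        rw [lintegral_const_mul' _ _ ENNReal.ofReal_ne_top]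
        congr 1
        exact lintegral_sub_right_eq_self (fun x => ∫⁻ y : ES N,
          ENNReal.ofReal ((φ x - φ y) ^ 2 / ‖x - y‖ ^ ((N : ℝ) + 2 * s))) t
    _ = _ := by
        rw [lintegral_mul_const, ← ofReal_integral_eq_lintegral_ofReal hρi
          (Eventually.of_forall h0), h1]
        · simp
        · have := hρ.measurable
          fun_prop

/-- Stability extends by mollification from `C¹` to merely continuous compactly supported test
functions. -/
lemma stable_continuous {N : ℕ} {s : ℝ} {u φ : ES N → ℝ} (hc : 0 ≤ fracC N s)
    (hu : Continuous u) (hst : IsStable N s u) (hφ : Continuous φ) (hφc : HasCompactSupport φ) :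
    ∫⁻ x, ENNReal.ofReal (Real.exp (u x) * φ x ^ 2) ≤
      ENNReal.ofReal (fracC N s / 2) * gagE N s φ := by
  let B : ℕ → ContDiffBump (0 : ES N) := fun n =>
    ⟨1 / (2 * ((n : ℝ) + 1)), 1 / ((n : ℝ) + 1), by positivity, by
      apply one_div_lt_one_div_of_lt <;> nlinarith [(Nat.cast_nonneg n : (0 : ℝ) ≤ n)]⟩
  let ψ : ℕ → ES N → ℝ := fun n x => ∫ t, (B n).normed volume t * φ (x - t)
  have hψ : ∀ n, ψ n = convolution ((B n).normed volume) φ (ContinuousLinearMap.lsmul ℝ ℝ) volume := by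
    intro n; funext x; simp [ψ, convolution]
  have hB : Tendsto (fun n => (B n).rOut) atTop (nhds 0) := tendsto_one_div_add_atTop_nhds_zero_nat
  have hlim : ∀ x, Tendsto (fun n => ψ n x) atTop (nhds (φ x)) := by
    intro x
    simp_rw [hψ]
    exact ContDiffBump.convolution_tendsto_right_of_continuous hB hφ x
  have hsm : ∀ n, ContDiff ℝ 1 (ψ n) := by
    intro n
    rw [hψ]
    exact HasCompactSupport.contDiff_convolution_left (n := 1) _ (B n).hasCompactSupport_normed
      (B n).contDiff_normed hφ.locallyIntegrable
  have hcs : ∀ n, HasCompactSupport (ψ n) := by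
    intro n
    rw [hψ]
    exact HasCompactSupport.convolution _ (B n).hasCompactSupport_normed hφc
  have hle : ∀ n, ∫⁻ x, ENNReal.ofReal (Real.exp (u x) * ψ n x ^ 2) ≤
      ENNReal.ofReal (fracC N s / 2) * gagE N s φ := by
    intro n
    have cψ := (hsm n).continuous
    have hi : Integrable fun x => Real.exp (u x) * ψ n x ^ 2 := by
      apply Continuous.integrable_of_hasCompactSupport
      · fun_prop
      · apply HasCompactSupport.mul_left
        have := (hcs n).comp_left (g := fun r : ℝ => r ^ 2) (by simp)
        exact this
    rw [← ofReal_integral_eq_lintegral_ofReal hi (Eventually.of_forall fun x => by positivity)]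
    refine (ENNReal.ofReal_le_ofReal (hst (ψ n) (hsm n) (hcs n))).trans ?_
    rw [ENNReal.ofReal_mul (by positivity)]
    gcongr
    refine le_trans ?_ (gagE_convolution_le (ρ := (B n).normed volume) (fun x => (B n).nonneg_normed x)
      (B n).integral_normed (B n).continuous_normed (B n).hasCompactSupport_normed hφ)
    refine (ofReal_integral_le fun x => integral_nonneg fun y => by positivity).trans ?_
    exact lintegral_mono fun x => ofReal_integral_le fun y => by positivity
  calc _ ≤ ∫⁻ x, liminf (fun n => ENNReal.ofReal (Real.exp (u x) * ψ n x ^ 2)) atTop := by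
        apply lintegral_mono
        intro x
        have : Tendsto (fun n => ENNReal.ofReal (Real.exp (u x) * ψ n x ^ 2)) atTop
            (nhds (ENNReal.ofReal (Real.exp (u x) * φ x ^ 2))) :=
          ENNReal.tendsto_ofReal (((hlim x).pow 2).const_mul _)
        exact this.liminf_eq.ge
    _ ≤ liminf (fun n => ∫⁻ x, ENNReal.ofReal (Real.exp (u x) * ψ n x ^ 2)) atTop := by
        apply lintegral_liminf_le
        intro n
        have := (hsm n).continuous.measurable
        have := hu.measurable
        fun_prop
    _ ≤ _ := by
        refine liminf_le_of_frequently_le' ?_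
        exact Frequently.of_forall hle

/-! ### Cutoffs and bounds from stability -/

lemma fracC_pos {N : ℕ} {s : ℝ} (hs0 : 0 < s) (hs1 : s < 1) : 0 < fracC N s := by
  unfold fracC
  have := Real.Gamma_pos_of_pos (show 0 < (N : ℝ) / 2 + s by positivity)
  have := Real.Gamma_pos_of_pos (show 0 < 1 - s by linarith)
  positivity

/-- The `1`-Lipschitz cutoff equal to `1` on `B(x₀,1)` and vanishing outside `B(x₀,2)`. -/
def cut {N : ℕ} (x₀ x : ES N) : ℝ := max 0 (min 1 (2 - ‖x - x₀‖))

section cut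
variable {N : ℕ} (x₀ : ES N)

lemma cut_nonneg (x : ES N) : 0 ≤ cut x₀ x := le_max_left _ _

lemma cut_le_one (x : ES N) : cut x₀ x ≤ 1 := max_le zero_le_one (min_le_left _ _)

lemma continuous_cut : Continuous (cut x₀) := by unfold cut; fun_prop

lemma cut_eq_one {x : ES N} (hx : x ∈ Metric.ball x₀ 1) : cut x₀ x = 1 := by
  rw [mem_ball_iff_norm] at hx
  unfold cut
  rw [min_eq_left (by linarith)]; simp

lemma cut_eq_zero {x : ES N} (hx : x ∉ Metric.closedBall x₀ 2) : cut x₀ x = 0 := by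
  rw [mem_closedBall_iff_norm, not_le] at hx
  unfold cut
  exact max_eq_left ((min_le_right _ _).trans (by linarith))

lemma hasCompactSupport_cut : HasCompactSupport (cut x₀) :=
  HasCompactSupport.intro (isCompact_closedBall x₀ 2) fun _ hx => cut_eq_zero x₀ hx

lemma abs_cut_sub_le (x y : ES N) : |cut x₀ x - cut x₀ y| ≤ ‖x - y‖ := by
  have h : |(2 - ‖x - x₀‖) - (2 - ‖y - x₀‖)| ≤ ‖x - y‖ := by
    rw [sub_sub_sub_cancel_left, abs_sub_comm]
    refine (abs_norm_sub_norm_le _ _).trans ?_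
    rw [sub_sub_sub_cancel_right]
  unfold cut
  refine (abs_max_sub_max_le_max _ _ _ _).trans (max_le (by simp) ?_)
  refine (abs_min_sub_min_le_max _ _ _ _).trans (max_le (by simp) h)

end cut

/-- Schur-type bound for a symmetrized weight times a kernel. -/
lemma lintegral_symm_le {N : ℕ} {w : ES N → ENNReal} {L : ES N → ES N → ENNReal} {C : ENNReal}
    (hw : Measurable w) (hL : Measurable (Function.uncurry L)) (hC : ∀ x, ∫⁻ y, L x y ≤ C) :
    ∫⁻ x, ∫⁻ y, (w x * L x y + w y * L y x) ≤ 2 * C * ∫⁻ x, w x := by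
  have h1 : ∫⁻ x, ∫⁻ y, w x * L x y ≤ C * ∫⁻ x, w x := by
    rw [← lintegral_const_mul _ hw]
    apply lintegral_mono
    intro x
    beta_reduce
    have : Measurable (L x) := hL.comp measurable_prodMk_left
    rw [lintegral_const_mul _ this, mul_comm]
    gcongr
    exact hC x
  have hm : Measurable (Function.uncurry fun x y => w x * L x y) := by
    apply Measurable.mul _ hL
    exact hw.comp measurable_fst
  have h2 : ∫⁻ x, ∫⁻ y, w y * L y x ≤ C * ∫⁻ x, w x := by
    rw [lintegral_lintegral_swap]
    · exact h1
    · exact (hm.comp measurable_swap).aemeasurable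
  calc _ = ∫⁻ x, ((∫⁻ y, w x * L x y) + ∫⁻ y, w y * L y x) := by
        congr 1; funext x
        rw [lintegral_add_left]
        exact hm.comp measurable_prodMk_left
    _ = (∫⁻ x, ∫⁻ y, w x * L x y) + ∫⁻ x, ∫⁻ y, w y * L y x := by
        rw [lintegral_add_left]
        exact hm.lintegral_prod_right'
    _ ≤ C * (∫⁻ x, w x) + C * ∫⁻ x, w x := add_le_add h1 h2
    _ = _ := by ring

lemma gagE_cut_le {N : ℕ} (hN : 1 ≤ N) {s : ℝ} (hs0 : 0 < s) (hs1 : s < 1) :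
    ∃ C : ENNReal, C ≠ ⊤ ∧ ∀ x₀ : ES N, gagE N s (cut x₀) ≤ C := by
  have hk := integrable_kernel hN hs0 (show 2 * s < 2 by linarith)
  refine ⟨2 * (∫⁻ z : ES N, ENNReal.ofReal (min 1 (‖z‖ ^ (2 : ℝ)) / ‖z‖ ^ ((N : ℝ) + 2 * s))) *
    volume (Metric.closedBall (0 : ES N) 2), ?_, fun x₀ => ?_⟩
  · refine ENNReal.mul_ne_top (ENNReal.mul_ne_top (by simp) ?_) ?_
    · exact hk.lintegral_lt_top.ne
    · exact (isCompact_closedBall _ _).measure_lt_top.ne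
  · have hkm : Measurable fun z : ES N =>
      ENNReal.ofReal (min 1 (‖z‖ ^ (2 : ℝ)) / ‖z‖ ^ ((N : ℝ) + 2 * s)) := by fun_prop
    have := lintegral_symm_le (N := N) (w := (Metric.closedBall x₀ 2).indicator 1)
      (L := fun x y => ENNReal.ofReal (min 1 (‖x - y‖ ^ (2 : ℝ)) / ‖x - y‖ ^ ((N : ℝ) + 2 * s)))
      (measurable_one.indicator Metric.isClosed_closedBall.measurableSet)
      (by unfold Function.uncurry; fun_prop) (fun x => (lintegral_sub_left_eq_self (fun z : ES N =>
      ENNReal.ofReal (min 1 (‖z‖ ^ (2 : ℝ)) / ‖z‖ ^ ((N : ℝ) + 2 * s))) x).le)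
    rw [lintegral_indicator_one Metric.isClosed_closedBall.measurableSet,
      Measure.addHaar_closedBall_center] at this
    refine le_trans ?_ this
    apply lintegral_mono; intro x; apply lintegral_mono; intro y
    have hd : (cut x₀ x - cut x₀ y) ^ 2 ≤ min 1 (‖x - y‖ ^ (2 : ℝ)) := by
      rw [Real.rpow_two, ← sq_abs]
      have a1 : |cut x₀ x - cut x₀ y| ≤ 1 := by
        rw [abs_le]
        have := cut_nonneg x₀ x; have := cut_nonneg x₀ y
        have := cut_le_one x₀ x; have := cut_le_one x₀ y
        constructor <;> linarith
      exact le_min (pow_le_one₀ (abs_nonneg _) a1)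
        (pow_le_pow_left₀ (abs_nonneg _) (abs_cut_sub_le x₀ x y) 2)
    have hd' : ENNReal.ofReal ((cut x₀ x - cut x₀ y) ^ 2 / ‖x - y‖ ^ ((N : ℝ) + 2 * s)) ≤
        ENNReal.ofReal (min 1 (‖x - y‖ ^ (2 : ℝ)) / ‖x - y‖ ^ ((N : ℝ) + 2 * s)) :=
      ENNReal.ofReal_le_ofReal (by gcongr)
    by_cases hx : x ∈ Metric.closedBall x₀ 2
    · simp only [indicator_of_mem hx, Pi.one_apply, one_mul]
      exact hd'.trans le_self_add
    by_cases hy : y ∈ Metric.closedBall x₀ 2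
    · simp only [indicator_of_mem hy, Pi.one_apply, one_mul]
      rw [norm_sub_rev y x]
      exact hd'.trans le_add_self
    · simp [cut_eq_zero x₀ hx, cut_eq_zero x₀ hy]

/-- Bound for `∫ e^u` over unit balls, from stability tested with the cutoff. -/
lemma exp_ball_bound {N : ℕ} (hN : 1 ≤ N) {s : ℝ} (hs0 : 0 < s) (hs1 : s < 1) :
    ∃ C : ENNReal, C ≠ ⊤ ∧ ∀ u : ES N → ℝ, Continuous u → IsStable N s u → ∀ x₀ : ES N,
      ∫⁻ x in Metric.ball x₀ 1, ENNReal.ofReal (Real.exp (u x)) ≤ C := by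
  obtain ⟨C, hC, h⟩ := gagE_cut_le hN hs0 hs1
  refine ⟨ENNReal.ofReal (fracC N s / 2) * C, ENNReal.mul_ne_top (by simp) hC,
    fun u hu hst x₀ => ?_⟩
  have := stable_continuous (fracC_pos hs0 hs1).le hu hst (continuous_cut x₀)
    (hasCompactSupport_cut x₀)
  refine le_trans ?_ (this.trans (mul_le_mul_right (h x₀) _))
  rw [← lintegral_indicator Metric.isOpen_ball.measurableSet]
  apply lintegral_mono
  intro x
  by_cases hx : x ∈ Metric.ball x₀ 1
  · simp [indicator_of_mem hx, cut_eq_one x₀ hx]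
  · simp [indicator_of_notMem hx]

/-- Uniform bounds over unit balls give weighted global bounds, for weights that vary by a
bounded factor over unit distances. -/
lemma lintegral_weight_le {N : ℕ} {F g : ES N → ENNReal} {A S : ENNReal} (hF : Measurable F)
    (hg : Measurable g) (hA : ∀ y z : ES N, ‖y - z‖ < 1 → g y ≤ A * g z)
    (hS : ∀ z, ∫⁻ y in Metric.ball z 1, F y ≤ S) :
    volume (Metric.ball (0 : ES N) 1) * ∫⁻ y, F y * g y ≤ A * S * ∫⁻ z, g z := by
  have hD : MeasurableSet {q : ES N × ES N | ‖q.1 - q.2‖ < 1} :=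
    measurableSet_lt (by fun_prop) measurable_const
  have hm : Measurable fun q : ES N × ES N =>
      {q : ES N × ES N | ‖q.1 - q.2‖ < 1}.indicator (fun q => F q.1 * g q.1) q := by
    apply Measurable.indicator _ hD
    fun_prop
  calc _ = ∫⁻ y, ∫⁻ z, {q : ES N × ES N | ‖q.1 - q.2‖ < 1}.indicator
          (fun q => F q.1 * g q.1) (y, z) := by
        rw [← lintegral_const_mul _ (by fun_prop)]
        congr 1; funext y
        have : (fun z => {q : ES N × ES N | ‖q.1 - q.2‖ < 1}.indicator
          (fun q => F q.1 * g q.1) (y, z)) = (Metric.ball y 1).indicator fun _ => F y * g y := by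
          funext z
          by_cases h : ‖y - z‖ < 1
          · rw [indicator_of_mem (by exact h), indicator_of_mem (by
              rw [mem_ball_iff_norm, norm_sub_rev]; exact h)]
          · rw [indicator_of_notMem (by exact h), indicator_of_notMem (by
              rw [mem_ball_iff_norm, norm_sub_rev]; exact h)]
        rw [this, lintegral_indicator_const Metric.isOpen_ball.measurableSet,
          Measure.addHaar_ball_center volume y, mul_comm]
    _ = ∫⁻ z, ∫⁻ y, {q : ES N × ES N | ‖q.1 - q.2‖ < 1}.indicator
          (fun q => F q.1 * g q.1) (y, z) := lintegral_lintegral_swap hm.aemeasurable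
    _ ≤ ∫⁻ z, A * S * g z := by
        apply lintegral_mono
        intro z
        calc _ ≤ ∫⁻ y, (Metric.ball z 1).indicator (fun y => F y * (A * g z)) y := by
              apply lintegral_mono
              intro y
              beta_reduce
              by_cases h : ‖y - z‖ < 1
              · rw [indicator_of_mem (by exact h), indicator_of_mem (by
                  rw [mem_ball_iff_norm]; exact h)]
                gcongr
                exact hA y z h
              · rw [indicator_of_notMem (by exact h)]; exact bot_le
          _ = (∫⁻ y in Metric.ball z 1, F y) * (A * g z) := by
              rw [lintegral_indicator Metric.isOpen_ball.measurableSet, lintegral_mul_const _ hF]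
          _ ≤ S * (A * g z) := by gcongr; exact hS z
          _ = _ := by ring
    _ = _ := lintegral_const_mul _ hg

lemma volume_ball_pos_ne_top {N : ℕ} :
    volume (Metric.ball (0 : ES N) 1) ≠ 0 ∧ volume (Metric.ball (0 : ES N) 1) ≠ ⊤ :=
  ⟨(Metric.measure_ball_pos _ _ one_pos).ne', measure_ball_lt_top.ne⟩

lemma japanese_comparable {N : ℕ} {p : ℝ} (hp : 0 ≤ p) (x y z : ES N) (h : ‖y - z‖ < 1) :
    (1 + ‖x - y‖) ^ (-p) ≤ 2 ^ p * (1 + ‖x - z‖) ^ (-p) := by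
  rw [Real.rpow_neg (by positivity), Real.rpow_neg (by positivity), ← div_eq_mul_inv,
    inv_eq_one_div, div_le_div_iff₀ (by positivity) (by positivity), one_mul,
    ← Real.mul_rpow (by norm_num) (by positivity)]
  apply Real.rpow_le_rpow (by positivity) _ hp
  have : ‖x - z‖ ≤ ‖x - y‖ + ‖y - z‖ := norm_sub_le_norm_sub_add_norm_sub x y z
  have := norm_nonneg (x - y)
  linarith

lemma fracEta_comparable {N : ℕ} {s : ℝ} (hs : 0 < s) (y z : ES N) (h : ‖y - z‖ < 1) :
    fracEta N s y ≤ 3 ^ (((N : ℝ) + 2 * s) / 2) * fracEta N s z := by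
  unfold fracEta
  rw [Real.rpow_neg (by positivity), Real.rpow_neg (by positivity), ← div_eq_mul_inv,
    inv_eq_one_div, div_le_div_iff₀ (by positivity) (by positivity), one_mul,
    ← Real.mul_rpow (by norm_num) (by positivity)]
  apply Real.rpow_le_rpow (by positivity) _ (by positivity)
  have h1 : ‖z‖ ≤ ‖y‖ + 1 := by
    have := norm_sub_norm_le z y
    rw [norm_sub_rev] at this; linarith
  have h0 := norm_nonneg y
  have h2 : ‖z‖ ^ 2 ≤ (‖y‖ + 1) ^ 2 := by gcongr
  nlinarith [sq_nonneg (‖y‖ - 1)]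

/-- The error kernel is integrable in the second variable, uniformly in the first. -/
lemma errL_bound {N : ℕ} (hN : 1 ≤ N) {s : ℝ} (hs0 : 0 < s) (hs1 : s < 1) :
    ∃ C : ENNReal, C ≠ ⊤ ∧ ∀ u : ES N → ℝ, Continuous u → IsStable N s u → ∀ x : ES N,
      ∫⁻ y, ENNReal.ofReal (errL ((N : ℝ) + 2 * s) ‖x - y‖ (u y)) ≤ C := by
  obtain ⟨S, hS, h⟩ := exp_ball_bound hN hs0 hs1
  have hk := integrable_kernel hN hs0 (show 2 * s < 2 by linarith)
  have hj := integrable_japanese (N := N) hs0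
  obtain ⟨v0, vt⟩ := volume_ball_pos_ne_top (N := N)
  set p := (N : ℝ) + 2 * s with hp
  have hp0 : 0 ≤ p := by positivity
  set K := ∫⁻ z : ES N, ENNReal.ofReal (min 1 (‖z‖ ^ (2 : ℝ)) / ‖z‖ ^ p) with hK
  set J := ∫⁻ z : ES N, ENNReal.ofReal ((1 + ‖z‖) ^ (-p)) with hJ
  have hJt : J ≠ ⊤ := hj.lintegral_lt_top.ne
  refine ⟨K + (J + ENNReal.ofReal (2 ^ p) * S * J / volume (Metric.ball (0 : ES N) 1)), ?_,
    fun u hu hst x => ?_⟩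
  · refine ENNReal.add_ne_top.2 ⟨hk.lintegral_lt_top.ne, ENNReal.add_ne_top.2 ⟨hJt, ?_⟩⟩
    exact ENNReal.div_ne_top (by finiteness) v0
  · have hum := hu.measurable
    have hE : ∀ y, ENNReal.ofReal (errL p ‖x - y‖ (u y)) =
        ENNReal.ofReal (min 1 (‖x - y‖ ^ (2 : ℝ)) / ‖x - y‖ ^ p) +
        (ENNReal.ofReal ((1 + ‖x - y‖) ^ (-p)) +
          ENNReal.ofReal (Real.exp (u y)) * ENNReal.ofReal ((1 + ‖x - y‖) ^ (-p))) := by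
      intro y
      have : 0 ≤ min 1 (‖x - y‖ ^ 2) := le_min zero_le_one (sq_nonneg _)
      unfold errL
      rw [Real.rpow_two, ← ENNReal.ofReal_mul (Real.exp_pos _).le,
        ← ENNReal.ofReal_add (by positivity) (by positivity),
        ← ENNReal.ofReal_add (by positivity) (by positivity)]
      congr 1; ring
    simp_rw [hE]
    rw [lintegral_add_left (by fun_prop), lintegral_add_left (by fun_prop)]
    have j1 : ∫⁻ y : ES N, ENNReal.ofReal ((1 + ‖x - y‖) ^ (-p)) = J :=
      lintegral_sub_left_eq_self (fun z : ES N => ENNReal.ofReal ((1 + ‖z‖) ^ (-p))) x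
    have k1 : ∫⁻ y : ES N, ENNReal.ofReal (min 1 (‖x - y‖ ^ (2 : ℝ)) / ‖x - y‖ ^ p) = K :=
      lintegral_sub_left_eq_self
        (fun z : ES N => ENNReal.ofReal (min 1 (‖z‖ ^ (2 : ℝ)) / ‖z‖ ^ p)) x
    rw [j1, k1]
    gcongr
    rw [ENNReal.le_div_iff_mul_le (Or.inl v0) (Or.inl vt), mul_comm]
    have := lintegral_weight_le (F := fun y => ENNReal.ofReal (Real.exp (u y)))
      (g := fun y => ENNReal.ofReal ((1 + ‖x - y‖) ^ (-p))) (A := ENNReal.ofReal (2 ^ p))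
      (by fun_prop) (by fun_prop) (fun y z hyz => by
        rw [← ENNReal.ofReal_mul (by positivity)]
        exact ENNReal.ofReal_le_ofReal (japanese_comparable hp0 x y z hyz)) (h u hu hst)
    rw [j1] at this
    exact this

/-! ### Truncated operators and the tested equation -/

lemma MemCHolder.continuous' {N : ℕ} {β : ℝ} {u : ES N → ℝ} (hβ : 0 < β) (h : MemCHolder β u) :
    Continuous u := by
  rcases le_or_gt β 1 with h1 | h1
  · obtain ⟨C, hC⟩ := h.1 h1
    exact hC.continuous (by simpa using hβ)
  · exact (h.2 h1).1.continuous

/-- Functions in `C^β` have second differences of order `|z|^β`. -/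
lemma MemCHolder.second_difference {N : ℕ} {β : ℝ} {u : ES N → ℝ} (hβ : 0 < β)
    (h : MemCHolder β u) :
    ∃ C : ℝ, 0 ≤ C ∧ ∀ x z : ES N, |2 * u x - u (x + z) - u (x - z)| ≤ C * ‖z‖ ^ β := by
  rcases le_or_gt β 1 with h1 | h1
  · obtain ⟨C, hC⟩ := h.1 h1
    refine ⟨2 * C, by positivity, fun x z => ?_⟩
    have k1 := hC.dist_le x (x + z)
    have k2 := hC.dist_le x (x - z)
    rw [Real.coe_toNNReal _ hβ.le] at k1 k2
    simp only [dist_self_add_right, Real.dist_eq] at k1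
    have : dist x (x - z) = ‖z‖ := by rw [dist_eq_norm]; simp
    rw [this, Real.dist_eq] at k2
    calc _ = |(u x - u (x + z)) + (u x - u (x - z))| := by congr 1; ring
      _ ≤ _ := abs_add_le _ _
      _ ≤ _ := by linarith
  · obtain ⟨hd, C, hC⟩ := h.2 h1
    refine ⟨C * 2 ^ (β - 1), by positivity, fun x z => ?_⟩
    rcases eq_or_ne z 0 with rfl | hz
    · simp only [add_zero, sub_zero]
      rw [show 2 * u x - u x - u x = 0 by ring, abs_zero]; positivity
    have hzp : 0 < ‖z‖ := norm_pos_iff.2 hz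
    have hder : ∀ t ∈ Icc (0 : ℝ) 1, HasDerivWithinAt (fun t : ℝ => u (x + t • z) + u (x - t • z))
        (fderiv ℝ u (x + t • z) z - fderiv ℝ u (x - t • z) z) (Icc 0 1) t := by
      intro t _
      apply HasDerivAt.hasDerivWithinAt
      have hl : HasDerivAt (fun t : ℝ => t • z) z t := by
        simpa using (hasDerivAt_id t).smul_const z
      have a1 := (hd (x + t • z)).hasFDerivAt.comp_hasDerivAt t (hl.const_add x)
      have a2 := (hd (x - t • z)).hasFDerivAt.comp_hasDerivAt t (hl.const_sub x)
      have := a1.add a2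
      rw [map_neg, ← sub_eq_add_neg] at this
      exact this
    have hb : ∀ t ∈ Ico (0 : ℝ) 1,
        ‖fderiv ℝ u (x + t • z) z - fderiv ℝ u (x - t • z) z‖ ≤ C * 2 ^ (β - 1) * ‖z‖ ^ β := by
      intro t ht
      have k := hC.dist_le (x + t • z) (x - t • z)
      rw [Real.coe_toNNReal _ (by linarith), dist_eq_norm, dist_eq_norm] at k
      have e : ‖x + t • z - (x - t • z)‖ ≤ 2 * ‖z‖ := by
        have : x + t • z - (x - t • z) = (2 * t) • z := by rw [mul_smul, two_smul]; abel
        rw [this, norm_smul, Real.norm_of_nonneg (by linarith [ht.1])]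
        nlinarith [ht.2]
      calc _ = ‖(fderiv ℝ u (x + t • z) - fderiv ℝ u (x - t • z)) z‖ := by simp
        _ ≤ ‖fderiv ℝ u (x + t • z) - fderiv ℝ u (x - t • z)‖ * ‖z‖ :=
            ContinuousLinearMap.le_opNorm _ _
        _ ≤ (C * (2 * ‖z‖) ^ (β - 1)) * ‖z‖ := by
            gcongr
            refine k.trans ?_
            gcongr
        _ = _ := by
            rw [Real.mul_rpow (by norm_num) hzp.le, Real.rpow_sub_one hzp.ne']
            field_simp
    have := norm_image_sub_le_of_norm_deriv_le_segment_01' hder hb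
    simp only [one_smul, zero_smul, add_zero, sub_zero, Real.norm_eq_abs] at this
    rw [abs_sub_comm] at this
    convert this using 2
    ring

/-- The kernel `|z|^{-p}` truncated to `|z| > ε`. -/
def kerE {N : ℕ} (p ε : ℝ) (z : ES N) : ℝ := {z : ES N | ε < ‖z‖}.indicator (fun z => 1 / ‖z‖ ^ p) z

section ker
variable {N : ℕ} {p ε : ℝ}

lemma kerE_nonneg (z : ES N) : 0 ≤ kerE p ε z :=
  indicator_nonneg (fun z _ => by positivity) z

lemma kerE_of_lt {z : ES N} (h : ε < ‖z‖) : kerE p ε z = 1 / ‖z‖ ^ p :=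
  indicator_of_mem (by exact h) _

lemma kerE_of_le {z : ES N} (h : ‖z‖ ≤ ε) : kerE p ε z = 0 :=
  indicator_of_notMem (by simpa using h) _

lemma kerE_neg (z : ES N) : kerE p ε (-z) = kerE p ε z := by
  rcases lt_or_ge ε ‖z‖ with h | h
  · rw [kerE_of_lt h, kerE_of_lt (by rwa [norm_neg]), norm_neg]
  · rw [kerE_of_le h, kerE_of_le (by rwa [norm_neg])]

@[fun_prop]
lemma measurable_kerE : Measurable (kerE p ε : ES N → ℝ) := by
  unfold kerE
  apply Measurable.indicator (by fun_prop)
  exact measurableSet_lt measurable_const (by fun_prop)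

lemma kerE_le (hp : 0 ≤ p) (hε : 0 < ε) (hε1 : ε ≤ 1) (x ξ : ES N) :
    kerE p ε (x - ξ) ≤ (2 / ε * (1 + ‖x‖)) ^ p * (1 + ‖ξ‖) ^ (-p) := by
  rcases lt_or_ge ε ‖x - ξ‖ with h | h
  · rw [kerE_of_lt h, Real.rpow_neg (by positivity), ← div_eq_mul_inv]
    have hpos : 0 < ‖x - ξ‖ := hε.trans h
    rw [div_le_div_iff₀ (by positivity) (by positivity), one_mul,
      ← Real.mul_rpow (by positivity) hpos.le]
    apply Real.rpow_le_rpow (by positivity) _ hp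
    have h1 : ‖ξ‖ ≤ ‖x‖ + ‖x - ξ‖ := by
      have := norm_sub_norm_le ξ x
      rw [norm_sub_rev] at this; linarith
    have h2 : 1 + ‖x - ξ‖ ≤ 2 / ε * ‖x - ξ‖ := by
      rw [div_mul_eq_mul_div, le_div_iff₀ hε]; nlinarith
    have := norm_nonneg x
    calc 1 + ‖ξ‖ ≤ (1 + ‖x‖) * (1 + ‖x - ξ‖) := by nlinarith
      _ ≤ (1 + ‖x‖) * (2 / ε * ‖x - ξ‖) := by gcongr
      _ = _ := by ring
  · rw [kerE_of_le h]; positivity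

end ker

/-- The truncated operator `∫_{|x-ξ|>ε} (u x - u ξ)/|x-ξ|^p dξ`. -/
def truncL {N : ℕ} (p ε : ℝ) (u : ES N → ℝ) (x : ES N) : ℝ :=
  ∫ ξ, (u x - u ξ) * kerE p ε (x - ξ)

lemma truncL_eq {N : ℕ} (p ε : ℝ) (u : ES N → ℝ) (x : ES N) :
    truncL p ε u x = ∫ ξ in {ξ : ES N | ε < ‖x - ξ‖}, (u x - u ξ) / ‖x - ξ‖ ^ p := by
  rw [← integral_indicator (measurableSet_lt measurable_const (by fun_prop))]
  unfold truncL
  congr 1; funext ξ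
  rcases lt_or_ge ε ‖x - ξ‖ with h | h
  · rw [kerE_of_lt h, indicator_of_mem (by exact h), mul_one_div]
  · rw [kerE_of_le h, indicator_of_notMem (by simpa using h), mul_zero]

section trunc
variable {N : ℕ} {p : ℝ} {u : ES N → ℝ}

lemma integrable_mul_kerE {ε : ℝ} (hp : 0 ≤ p) (hε : 0 < ε) (hε1 : ε ≤ 1) {v : ES N → ℝ}
    (hv : Measurable v) (hvi : Integrable fun ξ => |v ξ| * (1 + ‖ξ‖) ^ (-p)) (x : ES N) :
    Integrable (fun ξ => v ξ * kerE p ε (x - ξ)) ∧ ∫ ξ, |v ξ| * kerE p ε (x - ξ) ≤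
      (2 / ε * (1 + ‖x‖)) ^ p * ∫ ξ, |v ξ| * (1 + ‖ξ‖) ^ (-p) := by
  have hb : ∀ ξ, |v ξ| * kerE p ε (x - ξ) ≤
      (2 / ε * (1 + ‖x‖)) ^ p * (|v ξ| * (1 + ‖ξ‖) ^ (-p)) := by
    intro ξ
    have := mul_le_mul_of_nonneg_left (kerE_le hp hε hε1 x ξ) (abs_nonneg (v ξ))
    linarith
  have hi : Integrable (fun ξ => v ξ * kerE p ε (x - ξ)) := by
    refine (hvi.const_mul ((2 / ε * (1 + ‖x‖)) ^ p)).mono' (by fun_prop)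
      (Eventually.of_forall fun ξ => ?_)
    rw [Real.norm_eq_abs, abs_mul, abs_of_nonneg (kerE_nonneg (x - ξ))]
    exact hb ξ
  refine ⟨hi, ?_⟩
  rw [← integral_const_mul]
  refine integral_mono ?_ (hvi.const_mul _) hb
  have := hi.abs
  convert this using 2 with ξ
  rw [abs_mul, abs_of_nonneg (kerE_nonneg (x - ξ))]

/-- The truncated operators are bounded locally uniformly, independently of the truncation. The
second differences cancel the singularity after averaging the forms in `z` and `-z`. -/
lemma truncL_bound (hp : 0 ≤ p) (hu : Continuous u)
    (hH : Integrable fun ξ : ES N => (1 + ‖ξ‖) ^ (-p))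
    (huH : Integrable fun ξ => |u ξ| * (1 + ‖ξ‖) ^ (-p)) {β C : ℝ} (hC : 0 ≤ C)
    (hk : Integrable fun z : ES N => min 1 (‖z‖ ^ β) / ‖z‖ ^ p) (hβ : 0 < β)
    (hsd : ∀ x z : ES N, |2 * u x - u (x + z) - u (x - z)| ≤ C * ‖z‖ ^ β) :
    ∃ B : ES N → ℝ, Continuous B ∧ ∀ x, ∀ ε : ℝ, 0 < ε → ε ≤ 1 → |truncL p ε u x| ≤ B x := by
  have hum := hu.measurable
  set K := ∫ z : ES N, min 1 (‖z‖ ^ β) / ‖z‖ ^ p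
  set H := ∫ ξ : ES N, (1 + ‖ξ‖) ^ (-p)
  set U := ∫ ξ : ES N, |u ξ| * (1 + ‖ξ‖) ^ (-p)
  refine ⟨fun x => (C * K + 2 * (|u x| * ((2 * (1 + ‖x‖)) ^ p * H) + (2 * (1 + ‖x‖)) ^ p * U)) / 2,
    ?_, ?_⟩
  · have : Continuous fun x : ES N => (2 * (1 + ‖x‖)) ^ p :=
      Continuous.rpow_const (by fun_prop) fun x => Or.inr hp
    fun_prop
  intro x ε hε hε1
  have hone : Integrable fun ξ : ES N => |(1 : ℝ)| * (1 + ‖ξ‖) ^ (-p) := by simpa using hH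
  have iu := fun {ε : ℝ} (hε : 0 < ε) (hε1 : ε ≤ 1) =>
    integrable_mul_kerE hp hε hε1 hum huH x
  have i1 := fun {ε : ℝ} (hε : 0 < ε) (hε1 : ε ≤ 1) =>
    integrable_mul_kerE (v := fun _ => (1 : ℝ)) hp hε hε1 measurable_const hone x
  -- the two one-sided forms, obtained from `z = x - ξ` and `z = ξ - x`
  have hT : Integrable fun ξ => (u x - u ξ) * kerE p ε (x - ξ) := by
    have := ((i1 hε hε1).1.const_mul (u x)).sub (iu hε hε1).1
    convert this using 2 with ξ
    simp only [Pi.sub_apply]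
    ring
  have e1 : truncL p ε u x = ∫ z, (u x - u (x - z)) * kerE p ε z := by
    rw [← integral_sub_left_eq_self _ volume x]
    simp [truncL]
  have e2 : truncL p ε u x = ∫ z, (u x - u (x + z)) * kerE p ε z := by
    rw [e1, ← integral_neg_eq_self]
    simp [kerE_neg]
  have j1 : Integrable fun z => (u x - u (x - z)) * kerE p ε z := by
    have := hT.comp_sub_left x
    simpa using this
  have j2 : Integrable fun z => (u x - u (x + z)) * kerE p ε z := by
    have := j1.comp_neg
    simpa [kerE_neg] using this
  have e3 : 2 * truncL p ε u x = ∫ z, (2 * u x - u (x + z) - u (x - z)) * kerE p ε z := by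
    rw [two_mul]
    nth_rw 1 [e1]
    rw [e2, ← integral_add j1 j2]
    congr 1; funext z; ring
  -- the majorant splits at `|z| = 1`; these are the integrals of its far part
  have a1 : Integrable fun z : ES N => |u (x - z)| * kerE p 1 z := by
    have := ((iu one_pos le_rfl).1.abs).comp_sub_left x
    simpa [abs_mul, abs_of_nonneg (kerE_nonneg _)] using this
  have a2 : Integrable fun z : ES N => |u (x + z)| * kerE p 1 z := by
    have := a1.comp_neg
    simpa [kerE_neg] using this
  have a0 : Integrable fun z : ES N => kerE p 1 z := by
    have := (i1 one_pos le_rfl).1.comp_sub_left x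
    simpa using this
  have v1 : ∫ z : ES N, |u (x - z)| * kerE p 1 z ≤ (2 * (1 + ‖x‖)) ^ p * U := by
    rw [← integral_sub_left_eq_self _ volume x]
    simpa using (iu one_pos le_rfl).2
  have v2 : ∫ z : ES N, |u (x + z)| * kerE p 1 z ≤ (2 * (1 + ‖x‖)) ^ p * U := by
    rw [← integral_neg_eq_self]
    simpa [kerE_neg, ← sub_eq_add_neg] using v1
  have v0 : ∫ z : ES N, kerE p 1 z ≤ (2 * (1 + ‖x‖)) ^ p * H := by
    rw [← integral_sub_left_eq_self _ volume x]
    simpa using (i1 one_pos le_rfl).2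
  have hpt : ∀ z : ES N, ‖(2 * u x - u (x + z) - u (x - z)) * kerE p ε z‖ ≤
      C * (min 1 (‖z‖ ^ β) / ‖z‖ ^ p) + (2 * |u x| * kerE p 1 z + (|u (x + z)| * kerE p 1 z +
        |u (x - z)| * kerE p 1 z)) := by
    intro z
    rw [Real.norm_eq_abs, abs_mul, abs_of_nonneg (kerE_nonneg z)]
    have hmin : 0 ≤ min 1 (‖z‖ ^ β) := le_min zero_le_one (by positivity)
    rcases le_or_gt ‖z‖ 1 with h1 | h1
    · have hz0 := kerE_of_le (p := p) h1
      rw [hz0]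
      have hmin' : min 1 (‖z‖ ^ β) = ‖z‖ ^ β :=
        min_eq_right (Real.rpow_le_one (norm_nonneg z) h1 hβ.le)
      have hker : kerE p ε z ≤ 1 / ‖z‖ ^ p := by
        rcases lt_or_ge ε ‖z‖ with h | h
        · rw [kerE_of_lt h]
        · rw [kerE_of_le h]; positivity
      calc _ ≤ (C * ‖z‖ ^ β) * (1 / ‖z‖ ^ p) :=
            mul_le_mul (hsd x z) hker (kerE_nonneg z) (by positivity)
        _ = _ := by rw [hmin']; ring
    · rw [kerE_of_lt (hε1.trans_lt h1), kerE_of_lt h1]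
      have t : |2 * u x - u (x + z) - u (x - z)| ≤ 2 * |u x| + |u (x + z)| + |u (x - z)| := by
        refine (abs_sub _ _).trans (add_le_add ((abs_sub _ _).trans ?_) le_rfl)
        rw [abs_mul, abs_two]
      have t2 := mul_le_mul_of_nonneg_right t (by positivity : 0 ≤ 1 / ‖z‖ ^ p)
      have t3 : 0 ≤ C * (min 1 (‖z‖ ^ β) / ‖z‖ ^ p) := by positivity
      nlinarith
  have hIntg := (hk.const_mul C).add ((a0.const_mul (2 * |u x|)).add (a2.add a1))
  have main := norm_integral_le_of_norm_le hIntg (Eventually.of_forall hpt)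
  rw [← e3, integral_add' (hk.const_mul C) ((a0.const_mul (2 * |u x|)).add (a2.add a1)),
    integral_add' (a0.const_mul (2 * |u x|)) (a2.add a1), integral_add' a2 a1,
    integral_const_mul, integral_const_mul, Real.norm_eq_abs, abs_mul, abs_two] at main
  have := mul_le_mul_of_nonneg_left v0 (abs_nonneg (u x))
  rw [le_div_iff₀ two_pos]
  linarith

/-- The truncated operator tested against `f`, in symmetrized form. -/
lemma truncL_fubini {ε : ℝ} (hp : 0 ≤ p) (hε : 0 < ε) (hε1 : ε ≤ 1) (hu : Continuous u)
    (hH : Integrable fun ξ : ES N => (1 + ‖ξ‖) ^ (-p))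
    (huH : Integrable fun ξ => |u ξ| * (1 + ‖ξ‖) ^ (-p)) {f : ES N → ℝ} (hf : Continuous f)
    (hfc : HasCompactSupport f) :
    Integrable (fun q : ES N × ES N => (u q.1 - u q.2) * (f q.1 - f q.2) * kerE p ε (q.1 - q.2))
      (volume.prod volume) ∧
    ∫ q : ES N × ES N, (u q.1 - u q.2) * (f q.1 - f q.2) * kerE p ε (q.1 - q.2) ∂volume.prod volume
      = 2 * ∫ x, f x * truncL p ε u x ∧
    Integrable (fun x => f x * truncL p ε u x) := by
  have hum := hu.measurable
  have hfm := hf.measurable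
  have cA : Continuous fun x : ES N => (2 / ε * (1 + ‖x‖)) ^ p :=
    Continuous.rpow_const (by fun_prop) fun x => Or.inr hp
  have g1 : Integrable fun x : ES N => f x * (|u x| * (2 / ε * (1 + ‖x‖)) ^ p) :=
    (hf.mul (hu.abs.mul cA)).integrable_of_hasCompactSupport hfc.mul_right
  have g2 : Integrable fun x : ES N => f x * (2 / ε * (1 + ‖x‖)) ^ p :=
    (hf.mul cA).integrable_of_hasCompactSupport hfc.mul_right
  have hY : Integrable (fun q : ES N × ES N => f q.1 * ((u q.1 - u q.2) * kerE p ε (q.1 - q.2)))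
      (volume.prod volume) := by
    refine ((g1.abs.mul_prod hH).add (g2.abs.mul_prod huH)).mono' (by fun_prop)
      (Eventually.of_forall fun q => ?_)
    have hA : 0 ≤ (2 / ε * (1 + ‖q.1‖)) ^ p := by positivity
    simp only [Pi.add_apply, Real.norm_eq_abs, abs_mul, abs_abs, abs_of_nonneg hA,
      abs_of_nonneg (kerE_nonneg (q.1 - q.2))]
    calc |f q.1| * (|u q.1 - u q.2| * kerE p ε (q.1 - q.2)) ≤
        |f q.1| * ((|u q.1| + |u q.2|) * ((2 / ε * (1 + ‖q.1‖)) ^ p * (1 + ‖q.2‖) ^ (-p))) := by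
          gcongr
          · exact kerE_nonneg _
          · exact abs_sub _ _
          · exact kerE_le hp hε hε1 _ _
      _ = _ := by ring
  have hZ : (fun q : ES N × ES N => (u q.1 - u q.2) * (f q.1 - f q.2) * kerE p ε (q.1 - q.2)) =
      (fun q : ES N × ES N => f q.1 * ((u q.1 - u q.2) * kerE p ε (q.1 - q.2))) +
      (fun q : ES N × ES N => f q.1 * ((u q.1 - u q.2) * kerE p ε (q.1 - q.2))) ∘ Prod.swap := by
    funext q
    simp only [Pi.add_apply, Function.comp, Prod.fst_swap, Prod.snd_swap]
    rw [← kerE_neg (q.2 - q.1), neg_sub]; ring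
  have hfub : ∫ q : ES N × ES N, f q.1 * ((u q.1 - u q.2) * kerE p ε (q.1 - q.2))
      ∂volume.prod volume = ∫ x, f x * truncL p ε u x := by
    rw [integral_prod _ hY]
    congr 1; funext x
    exact integral_const_mul (f x) _
  refine ⟨?_, ?_, ?_⟩
  · rw [hZ]; exact hY.add hY.swap
  · rw [hZ, integral_add' hY hY.swap]
    have : ∫ q, ((fun q : ES N × ES N => f q.1 * ((u q.1 - u q.2) * kerE p ε (q.1 - q.2))) ∘
        Prod.swap) q ∂volume.prod volume = ∫ q : ES N × ES N, f q.1 * ((u q.1 - u q.2) *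
          kerE p ε (q.1 - q.2)) ∂volume.prod volume :=
      integral_prod_swap (μ := volume) (ν := volume)
        (fun q : ES N × ES N => f q.1 * ((u q.1 - u q.2) * kerE p ε (q.1 - q.2)))
    rw [this, hfub]; ring
  · have := hY.integral_prod_left
    convert this using 2 with x
    exact (integral_const_mul (f x) _).symm

end trunc

/-- The truncated operators, tested against `f`, converge to the tested right-hand side, by
dominated convergence. -/
lemma tendsto_tested {N : ℕ} (hN : 1 ≤ N) {s : ℝ} (hs0 : 0 < s) (hs1 : s < 1) {u : ES N → ℝ}
    (h : IsSolution N s u) (hu : Continuous u) {f : ES N → ℝ} (hf : Continuous f)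
    (hfc : HasCompactSupport f) (hH : Integrable fun ξ : ES N => (1 + ‖ξ‖) ^ (-((N : ℝ) + 2 * s)))
    (huH : Integrable fun ξ => |u ξ| * (1 + ‖ξ‖) ^ (-((N : ℝ) + 2 * s))) :
    Tendsto (fun n : ℕ => ∫ x, f x * truncL ((N : ℝ) + 2 * s) (1 / ((n : ℝ) + 1)) u x) atTop
      (nhds (∫ x, f x * (Real.exp (u x) / fracC N s))) := by
  obtain ⟨⟨σ, hσ, hH'⟩, -, heq⟩ := h
  have hc := fracC_pos (N := N) hs0 hs1
  have hp : 0 ≤ (N : ℝ) + 2 * s := by positivity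
  obtain ⟨C, hC, hsd⟩ := hH'.second_difference (by linarith)
  obtain ⟨B, hB, hBb⟩ := truncL_bound hp hu hH huH hC
    (integrable_kernel hN hs0 (show 2 * s < 2 * σ by linarith)) (by linarith) hsd
  have hε : ∀ n : ℕ, 0 < 1 / ((n : ℝ) + 1) := fun n => by positivity
  have hε1 : ∀ n : ℕ, 1 / ((n : ℝ) + 1) ≤ 1 := fun n => by
    rw [div_le_one (by positivity)]; linarith [(Nat.cast_nonneg n : (0 : ℝ) ≤ n)]
  refine tendsto_integral_of_dominated_convergence (fun x => |f x| * B x) ?_ ?_ ?_ ?_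
  · intro n
    exact (truncL_fubini hp (hε n) (hε1 n) hu hH huH hf hfc).2.2.aestronglyMeasurable
  · exact (hf.abs.mul hB).integrable_of_hasCompactSupport
      (HasCompactSupport.mul_right (hfc.norm))
  · intro n
    refine Eventually.of_forall fun x => ?_
    rw [Real.norm_eq_abs, abs_mul]
    gcongr
    exact hBb x _ (hε n) (hε1 n)
  · refine Eventually.of_forall fun x => Tendsto.const_mul _ ?_
    have h1 := heq x
    unfold HasFracLapAt at h1
    have h2 : Tendsto (fun n : ℕ => 1 / ((n : ℝ) + 1)) atTop (nhdsWithin 0 (Ioi 0)) :=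
      tendsto_nhdsWithin_iff.2 ⟨tendsto_one_div_add_atTop_nhds_zero_nat,
        Eventually.of_forall fun n => hε n⟩
    have h3 := (h1.comp h2).div_const (fracC N s)
    refine h3.congr fun n => ?_
    rw [truncL_eq]
    simp only [Function.comp]
    rw [mul_div_cancel_left₀ _ hc.ne']

/-! ### The local estimate -/

/-- If `θ` times the energy density of `P` is controlled by the symmetrized equation tested
against `f` plus an integrable error, then the full energy of `P` is controlled by the tested
right-hand side: this is the limit of the truncated identities, by Fatou's lemma. -/
lemma energy_le {N : ℕ} (hN : 1 ≤ N) {s : ℝ} (hs0 : 0 < s) (hs1 : s < 1) {u : ES N → ℝ}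
    (h : IsSolution N s u) (hu : Continuous u) {P f : ES N → ℝ} (hP : Continuous P)
    (hf : Continuous f) (hfc : HasCompactSupport f) {θ T : ℝ} (hθ : 0 ≤ θ) (hT : 0 ≤ T)
    {Err : ES N × ES N → ℝ} (hE0 : ∀ q, 0 ≤ Err q) (hEm : Measurable Err)
    (hET : ∫⁻ q, ENNReal.ofReal (Err q) ∂(volume.prod volume) ≤ ENNReal.ofReal T)
    (hpt : ∀ q : ES N × ES N, 0 < ‖q.1 - q.2‖ →
      θ * ((P q.1 - P q.2) ^ 2 / ‖q.1 - q.2‖ ^ ((N : ℝ) + 2 * s)) ≤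
        (u q.1 - u q.2) * (f q.1 - f q.2) / ‖q.1 - q.2‖ ^ ((N : ℝ) + 2 * s) + Err q) :
    ENNReal.ofReal θ * gagE N s P ≤
      ENNReal.ofReal (2 * (∫ x, f x * (Real.exp (u x) / fracC N s)) + T) := by
  have hp : 0 ≤ (N : ℝ) + 2 * s := by positivity
  have hPm := hP.measurable
  have hH := integrable_japanese (N := N) hs0
  have huH : Integrable fun ξ : ES N => |u ξ| * (1 + ‖ξ‖) ^ (-((N : ℝ) + 2 * s)) := by
    have := h.2.1.2
    convert this using 2 with ξ
    rw [Real.rpow_neg (by positivity), div_eq_mul_inv]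
  set p := (N : ℝ) + 2 * s with hpd
  have hε : ∀ n : ℕ, 0 < 1 / ((n : ℝ) + 1) := fun n => by positivity
  have hε1 : ∀ n : ℕ, 1 / ((n : ℝ) + 1) ≤ 1 := fun n => by
    rw [div_le_one (by positivity)]; linarith [(Nat.cast_nonneg n : (0 : ℝ) ≤ n)]
  have hEi : Integrable Err (volume.prod volume) :=
    ⟨hEm.aestronglyMeasurable, by
      rw [hasFiniteIntegral_iff_ofReal (Eventually.of_forall hE0)]
      exact hET.trans_lt ENNReal.ofReal_lt_top⟩
  have hEI : ∫ q, Err q ∂(volume.prod volume) ≤ T := by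
    rw [integral_eq_lintegral_of_nonneg_ae (Eventually.of_forall hE0) hEi.1]
    exact ENNReal.toReal_le_of_le_ofReal hT hET
  let F : ℕ → ES N × ES N → ENNReal := fun n q =>
    ENNReal.ofReal (θ * ((P q.1 - P q.2) ^ 2 * kerE p (1 / ((n : ℝ) + 1)) (q.1 - q.2)))
  have hF : ∀ n, ∫⁻ q, F n q ∂(volume.prod volume) ≤
      ENNReal.ofReal (2 * (∫ x, f x * truncL p (1 / ((n : ℝ) + 1)) u x) + T) := by
    intro n
    obtain ⟨z1, z2, -⟩ := truncL_fubini hp (hε n) (hε1 n) hu hH huH hf hfc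
    set Z := fun q : ES N × ES N =>
      (u q.1 - u q.2) * (f q.1 - f q.2) * kerE p (1 / ((n : ℝ) + 1)) (q.1 - q.2) with hZ
    have hle : ∀ q, θ * ((P q.1 - P q.2) ^ 2 * kerE p (1 / ((n : ℝ) + 1)) (q.1 - q.2)) ≤
        Z q + Err q := by
      intro q
      simp only [hZ]
      rcases lt_or_ge (1 / ((n : ℝ) + 1)) ‖q.1 - q.2‖ with hq | hq
      · rw [kerE_of_lt hq, mul_one_div, mul_one_div]
        exact hpt q ((hε n).trans hq)
      · rw [kerE_of_le hq]
        simpa using hE0 q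
    have h0 : ∀ q, 0 ≤ Z q + Err q := fun q =>
      le_trans (mul_nonneg hθ (mul_nonneg (sq_nonneg _) (kerE_nonneg _))) (hle q)
    calc ∫⁻ q, F n q ∂(volume.prod volume)
        ≤ ∫⁻ q, ENNReal.ofReal (Z q + Err q) ∂(volume.prod volume) :=
          lintegral_mono fun q => ENNReal.ofReal_le_ofReal (hle q)
      _ = ENNReal.ofReal (∫ q, (Z q + Err q) ∂(volume.prod volume)) :=
          (ofReal_integral_eq_lintegral_ofReal (z1.add hEi) (Eventually.of_forall h0)).symm
      _ ≤ _ := by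
          apply ENNReal.ofReal_le_ofReal
          rw [integral_add z1 hEi, z2]
          linarith
  have hFm : ∀ n, Measurable (F n) := fun n => by fun_prop
  have hgag : ENNReal.ofReal θ * gagE N s P =
      ∫⁻ q : ES N × ES N, ENNReal.ofReal (θ * ((P q.1 - P q.2) ^ 2 / ‖q.1 - q.2‖ ^ p))
        ∂(volume.prod volume) := by
    have hm : Measurable fun q : ES N × ES N =>
        ENNReal.ofReal ((P q.1 - P q.2) ^ 2 / ‖q.1 - q.2‖ ^ p) := by fun_prop
    simp_rw [ENNReal.ofReal_mul hθ]
    rw [lintegral_const_mul _ hm, lintegral_prod _ hm.aemeasurable]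
    rfl
  have hlim : ∀ q : ES N × ES N, Tendsto (fun n => F n q) atTop
      (nhds (ENNReal.ofReal (θ * ((P q.1 - P q.2) ^ 2 / ‖q.1 - q.2‖ ^ p)))) := by
    intro q
    rcases eq_or_ne q.1 q.2 with hq | hq
    · simp [F, hq]
    · have hpos : 0 < ‖q.1 - q.2‖ := norm_pos_iff.2 (sub_ne_zero.2 hq)
      refine tendsto_const_nhds.congr' ?_
      filter_upwards [(tendsto_one_div_add_atTop_nhds_zero_nat (𝕜 := ℝ)).eventually
        (gt_mem_nhds hpos)] with n hn
      simp only [F]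
      rw [kerE_of_lt hn, mul_one_div]
  have hR : Tendsto (fun n : ℕ =>
      ENNReal.ofReal (2 * (∫ x, f x * truncL p (1 / ((n : ℝ) + 1)) u x) + T)) atTop
      (nhds (ENNReal.ofReal (2 * (∫ x, f x * (Real.exp (u x) / fracC N s)) + T))) :=
    ENNReal.tendsto_ofReal
      (((tendsto_tested hN hs0 hs1 h hu hf hfc hH huH).const_mul 2).add_const T)
  rw [hgag, ← hR.liminf_eq]
  calc _ ≤ ∫⁻ q, liminf (fun n => F n q) atTop ∂(volume.prod volume) :=
        lintegral_mono fun q => (hlim q).liminf_eq.ge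
    _ ≤ liminf (fun n => ∫⁻ q, F n q ∂(volume.prod volume)) atTop := lintegral_liminf_le hFm
    _ ≤ _ := liminf_le_liminf (Eventually.of_forall hF)

/-- Young-type absorption: the error weight is a small multiple of `e^{(2α+1)a} d^{6M}` plus a
constant. -/
lemma errW_young {α κ a d : ℝ} {M : ℕ} (hα : 0 < α) (hα2 : α < 2) (hκ : 0 < κ) (hd : 0 ≤ d)
    (hd1 : d ≤ 1) : errW α M a d ≤
      κ * (Real.exp a * (Real.exp (α * a) * d ^ (3 * M)) ^ 2) + (1 + κ⁻¹ ^ (2 * α)) := by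
  have hdm0 : 0 ≤ d ^ M := by positivity
  have hdm1 : d ^ M ≤ 1 := pow_le_one₀ hd hd1
  have h1 : d ^ (5 * M) ≤ 1 := pow_le_one₀ hd hd1
  have e1 : Real.exp (2 * α * a) = Real.exp (α * a) ^ 2 := by
    rw [← Real.exp_nat_mul]; congr 1; push_cast; ring
  have h2 : Real.exp (2 * α * a) * d ^ (5 * M) ≤
      κ * (Real.exp a * (Real.exp (α * a) * d ^ (3 * M)) ^ 2) + κ⁻¹ ^ (2 * α) := by
    rcases le_or_gt 1 (κ * (Real.exp a * d ^ M)) with h | h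
    · have : 0 ≤ κ⁻¹ ^ (2 * α) := by positivity
      calc _ ≤ κ * (Real.exp a * d ^ M) * (Real.exp (2 * α * a) * d ^ (5 * M)) :=
            le_mul_of_one_le_left (by positivity) h
        _ = κ * (Real.exp a * (Real.exp (α * a) * d ^ (3 * M)) ^ 2) := by rw [e1]; ring
        _ ≤ _ := by linarith
    · have k1 : d ^ (5 * M) ≤ (d ^ M) ^ (2 * α) := by
        rw [mul_comm, pow_mul, ← Real.rpow_natCast (d ^ M)]
        exact Real.rpow_le_rpow_of_exponent_ge' hdm0 hdm1 (by positivity) (by push_cast; linarith)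
      have k2 : Real.exp a * d ^ M ≤ κ⁻¹ := by
        rw [← one_div, le_div_iff₀ hκ]; linarith
      have k3 : Real.exp (2 * α * a) = Real.exp a ^ (2 * α) := by
        rw [← Real.exp_mul]; congr 1; ring
      have : 0 ≤ κ * (Real.exp a * (Real.exp (α * a) * d ^ (3 * M)) ^ 2) := by positivity
      calc _ ≤ Real.exp a ^ (2 * α) * (d ^ M) ^ (2 * α) := by rw [k3]; gcongr
        _ = (Real.exp a * d ^ M) ^ (2 * α) := (Real.mul_rpow (Real.exp_pos a).le hdm0).symm
        _ ≤ κ⁻¹ ^ (2 * α) := by gcongr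
        _ ≤ _ := by linarith
  unfold errW
  linarith

/-- Bound on unit balls, uniform in the centre and in the stable solution. -/
lemma local_bound {N : ℕ} (hN : 1 ≤ N) {s : ℝ} (hs0 : 0 < s) (hs1 : s < 1) {α : ℝ} (hα : 0 < α)
    (hα2 : α < 2) : ∃ S : ℝ, ∀ u : ES N → ℝ, IsSolution N s u → IsStable N s u → ∀ x₀ : ES N,
      ∫⁻ x in Metric.ball x₀ 1, ENNReal.ofReal (Real.exp ((2 * α + 1) * u x)) ≤
        ENNReal.ofReal S := by
  have hc := fracC_pos (N := N) hs0 hs1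
  set c := fracC N s with hcd
  set p := (N : ℝ) + 2 * s with hpd
  set M := N + 2 with hM
  have hp : 0 < p := by positivity
  have hpM : p ≤ M := by rw [hM]; push_cast; linarith
  obtain ⟨C, hC, hpw⟩ := pointwise_main (δ := (2 - α) / 2) (p := p) (M := M) hα (by linarith)
    (by linarith) hp hpM (by omega)
  obtain ⟨CL, hCL, hL⟩ := errL_bound hN hs0 hs1
  set θ := (2 - (2 - α) / 2) / α with hθd
  have hθ1 : 1 < θ := by rw [hθd, lt_div_iff₀ hα]; linarith
  set Q := c * C * CL.toReal with hQ
  have hQ0 : 0 ≤ Q := by positivity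
  -- `κ` is chosen so that `Q * κ ≤ (θ - 1) / 2`
  set κ := (θ - 1) / (2 * (Q + 1)) with hκd
  have hκ : 0 < κ := div_pos (by linarith) (by positivity)
  have hQκ : Q * κ ≤ (θ - 1) / 2 := by
    rw [hκd, ← mul_div_assoc, div_le_div_iff₀ (by positivity) two_pos]
    nlinarith
  set K := 1 + κ⁻¹ ^ (2 * α) with hK
  set V := (volume (Metric.closedBall (0 : ES N) 2)).toReal with hV
  refine ⟨2 * (Q * (K * V)) / (θ - 1), fun u hsol hst x₀ => ?_⟩
  obtain ⟨σ, hσ, hhol⟩ := hsol.1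
  have hu : Continuous u := hhol.continuous' (by linarith)
  have hD := continuous_cut x₀
  set D := cut x₀ with hDd
  have hD0 : ∀ x, 0 ≤ D x := cut_nonneg x₀
  have hD1 : ∀ x, D x ≤ 1 := cut_le_one x₀
  have hMne : 3 * M ≠ 0 := by omega
  have hDout : ∀ x, x ∉ Metric.closedBall x₀ 2 → D x = 0 := fun x hx => cut_eq_zero x₀ hx
  have cs : ∀ {g : ES N → ℝ}, (∀ x, x ∉ Metric.closedBall x₀ 2 → g x = 0) →
      HasCompactSupport g := fun hg =>
    HasCompactSupport.intro (isCompact_closedBall x₀ 2) fun x hx => hg x hx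
  set P : ES N → ℝ := fun x => Real.exp (α * u x) * D x ^ (3 * M) with hPd
  have hPout : ∀ x, x ∉ Metric.closedBall x₀ 2 → P x = 0 := fun x hx => by
    simp only [hPd]; rw [hDout x hx, zero_pow hMne, mul_zero]
  have hP : Continuous P := by fun_prop
  have hPc : HasCompactSupport P := cs hPout
  set G : ES N → ℝ := fun x => Real.exp (u x) * P x ^ 2 with hG
  have hG0 : ∀ x, 0 ≤ G x := fun x => by positivity
  have hGi : Integrable G := (by fun_prop : Continuous G).integrable_of_hasCompactSupport
    (cs fun x hx => by simp [hG, hPout x hx])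
  set W : ES N → ℝ := fun x => errW α M (u x) (D x) with hW
  have hW0 : ∀ x, 0 ≤ W x := fun x => errW_nonneg (hD0 x)
  have hWout : ∀ x, x ∉ Metric.closedBall x₀ 2 → W x = 0 := fun x hx => by
    simp only [hW, errW]
    rw [hDout x hx, zero_pow (by omega), mul_zero]
  have hWcont : Continuous W := by unfold W errW; fun_prop
  have hWi : Integrable W := hWcont.integrable_of_hasCompactSupport (cs hWout)
  have hI0 : 0 ≤ ∫ x, G x := integral_nonneg hG0
  have hWle : ∫ x, W x ≤ κ * (∫ x, G x) + K * V := by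
    have hball : volume (Metric.closedBall x₀ 2) = volume (Metric.closedBall (0 : ES N) 2) :=
      Measure.addHaar_closedBall_center _ _ _
    have hfin : volume (Metric.closedBall x₀ 2) ≠ ⊤ := measure_closedBall_lt_top.ne
    have hind : Integrable ((Metric.closedBall x₀ 2).indicator fun _ => K) :=
      (integrable_indicator_iff measurableSet_closedBall).2 (integrableOn_const hfin)
    have : ∫ x, W x ≤ ∫ x, (κ * G x + (Metric.closedBall x₀ 2).indicator (fun _ => K) x) := by
      refine integral_mono hWi ((hGi.const_mul κ).add hind) fun x => ?_
      by_cases hx : x ∈ Metric.closedBall x₀ 2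
      · simp only [indicator_of_mem hx]
        exact errW_young hα hα2 hκ (hD0 x) (hD1 x)
      · simp only [indicator_of_notMem hx, hWout x hx, add_zero]
        exact mul_nonneg hκ.le (hG0 x)
    rw [integral_add (hGi.const_mul κ) hind, integral_const_mul,
      integral_indicator_const _ measurableSet_closedBall, measureReal_def, hball] at this
    simpa [mul_comm K] using this
  -- the error of `pointwise_main` as a function of the pair of points, with total mass at most `T`
  set Err : ES N × ES N → ℝ := fun q =>
    C * (W q.1 * errL p ‖q.1 - q.2‖ (u q.2) + W q.2 * errL p ‖q.1 - q.2‖ (u q.1)) with hErr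
  have hLn : ∀ x y b, 0 ≤ errL p ‖(x : ES N) - y‖ b := fun x y b => errL_nonneg (norm_nonneg _)
  have hErr0 : ∀ q, 0 ≤ Err q := fun q => by
    have := mul_nonneg (hW0 q.1) (hLn q.1 q.2 (u q.2))
    have := mul_nonneg (hW0 q.2) (hLn q.1 q.2 (u q.1))
    simp only [hErr]; positivity
  have hum := hu.measurable
  have hWm := hWcont.measurable
  have hErrm : Measurable Err := by unfold Err errL; fun_prop
  set T := 2 * C * CL.toReal * ∫ x, W x with hTd
  have hT0 : 0 ≤ T := mul_nonneg (by positivity) (integral_nonneg hW0)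
  have hET : ∫⁻ q, ENNReal.ofReal (Err q) ∂(volume.prod volume) ≤ ENNReal.ofReal T := by
    let L : ES N → ES N → ENNReal := fun x y => ENNReal.ofReal (errL p ‖x - y‖ (u y))
    have hLm : Measurable (Function.uncurry L) := by unfold L errL Function.uncurry; fun_prop
    have key := lintegral_symm_le (w := fun x => ENNReal.ofReal (W x)) (L := L) (C := CL)
      (by fun_prop) hLm (hL u hu hst)
    rw [lintegral_prod _ (by fun_prop)]
    have e : ∀ x y, ENNReal.ofReal (Err (x, y)) = ENNReal.ofReal C *
        (ENNReal.ofReal (W x) * L x y + ENNReal.ofReal (W y) * L y x) := by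
      intro x y
      simp only [hErr, L]
      rw [ENNReal.ofReal_mul hC.le, ENNReal.ofReal_add (mul_nonneg (hW0 x) (hLn _ _ _))
        (mul_nonneg (hW0 y) (hLn _ _ _)), ENNReal.ofReal_mul (hW0 x), ENNReal.ofReal_mul (hW0 y),
        norm_sub_rev y x]
    simp_rw [e, lintegral_const_mul' _ _ ENNReal.ofReal_ne_top]
    calc _ ≤ ENNReal.ofReal C * (2 * CL * ∫⁻ x, ENNReal.ofReal (W x)) := by gcongr
      _ = ENNReal.ofReal T := by
        rw [← ofReal_integral_eq_lintegral_ofReal hWi (Eventually.of_forall hW0), hTd,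
          ENNReal.ofReal_mul (by positivity), ENNReal.ofReal_mul (by positivity),
          ENNReal.ofReal_mul (by positivity), ENNReal.ofReal_toReal hCL, ENNReal.ofReal_ofNat]
        ring
  have hen := energy_le hN hs0 hs1 hsol hu hP (f := fun x => P x ^ 2) (by fun_prop)
    (cs fun x hx => by simp [hPout x hx]) (θ := θ) (by linarith) hT0 hErr0 hErrm hET
    (fun q hq => by
      have := hpw (u q.1) (u q.2) (D q.1) (D q.2) ‖q.1 - q.2‖ (hD0 _) (hD1 _) (hD0 _) (hD1 _) hq
        (abs_cut_sub_le x₀ _ _)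
      exact this)
  have hstab := stable_continuous hc.le hu hst hP hPc
  have hGl : ∫⁻ x, ENNReal.ofReal (G x) = ENNReal.ofReal (∫ x, G x) :=
    (ofReal_integral_eq_lintegral_ofReal hGi (Eventually.of_forall hG0)).symm
  have hfe : ∫ x, P x ^ 2 * (Real.exp (u x) / c) = (∫ x, G x) / c := by
    rw [← integral_div]
    congr 1; funext x
    simp only [hG]; ring
  rw [← hcd, hfe] at hen
  -- stability bounds `∫ G` by the energy of `P`, and the tested equation bounds that energy by
  -- `∫ G` again, with the factor `1 / θ < 1`
  have hmain : θ * (∫ x, G x) ≤ (∫ x, G x) + c / 2 * T := by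
    rw [← ENNReal.ofReal_le_ofReal_iff (by positivity), ENNReal.ofReal_mul (by linarith), ← hGl]
    calc _ ≤ ENNReal.ofReal θ * (ENNReal.ofReal (c / 2) * gagE N s P) := by gcongr
      _ = ENNReal.ofReal (c / 2) * (ENNReal.ofReal θ * gagE N s P) := by ring
      _ ≤ ENNReal.ofReal (c / 2) * ENNReal.ofReal (2 * ((∫ x, G x) / c) + T) := by gcongr
      _ = _ := by
        rw [← ENNReal.ofReal_mul (by positivity)]
        congr 1; field_simp
  have hI : ∫ x, G x ≤ 2 * (Q * (K * V)) / (θ - 1) := by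
    rw [le_div_iff₀ (by linarith)]
    have h1 : c / 2 * T = Q * ∫ x, W x := by rw [hTd, hQ]; ring
    have h2 := mul_le_mul_of_nonneg_left hWle hQ0
    have h3 := mul_le_mul_of_nonneg_right hQκ hI0
    nlinarith
  calc _ ≤ ∫⁻ x in Metric.ball x₀ 1, ENNReal.ofReal (G x) := by
        refine setLIntegral_mono' measurableSet_ball fun x hx => le_of_eq ?_
        have : D x = 1 := cut_eq_one x₀ hx
        simp only [hG, hPd, this, one_pow, mul_one]
        rw [← Real.exp_nat_mul, ← Real.exp_add]
        congr 2; push_cast; ring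
    _ ≤ ∫⁻ x, ENNReal.ofReal (G x) := setLIntegral_le_lintegral _ _
    _ ≤ _ := by rw [hGl]; exact ENNReal.ofReal_le_ofReal hI

/-! ### From unit balls to the weighted integral -/

/-- Uniform integral estimate for stable solutions:
`∫ e^{(2α+1)u} η ≤ C` with `C = C(N,s,α)` independent of `u`. -/
theorem uniform_integral_estimate (N : ℕ) (hN : 1 ≤ N) (s : ℝ) (hs0 : 0 < s)
    (hs1 : s < 1) (α : ℝ) (hα0 : 0 < α) (hα2 : α < 2) :
    ∃ C : ℝ, 0 < C ∧ ∀ u : ES N → ℝ, IsSolution N s u → IsStable N s u →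
      ∫ x : ES N, Real.exp ((2 * α + 1) * u x) * fracEta N s x ≤ C := by
  obtain ⟨S, hS⟩ := local_bound hN hs0 hs1 hα0 hα2
  obtain ⟨hv0, hvt⟩ := volume_ball_pos_ne_top (N := N)
  set v := volume (Metric.ball (0 : ES N) 1)
  have hη0 : ∀ x, 0 ≤ fracEta N s x := fun x => by unfold fracEta; positivity
  have hηi := integrable_fracEta (N := N) hs0
  set R : ENNReal := ENNReal.ofReal (3 ^ (((N : ℝ) + 2 * s) / 2)) * ENNReal.ofReal S *
    (∫⁻ z, ENNReal.ofReal (fracEta N s z)) / v with hR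
  have hRt : R ≠ ⊤ := by
    refine ENNReal.div_ne_top (ENNReal.mul_ne_top (by finiteness) ?_) hv0
    rw [← ofReal_integral_eq_lintegral_ofReal hηi (Eventually.of_forall hη0)]
    exact ENNReal.ofReal_ne_top
  refine ⟨R.toReal + 1, by positivity, fun u hsol hst => ?_⟩
  obtain ⟨σ, hσ, hhol⟩ := hsol.1
  have hum : Measurable u := (hhol.continuous' (by linarith)).measurable
  have hηm : Measurable (fracEta N s) := by unfold fracEta; fun_prop
  have h1 := lintegral_weight_le (N := N)
    (F := fun x => ENNReal.ofReal (Real.exp ((2 * α + 1) * u x)))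
    (g := fun x => ENNReal.ofReal (fracEta N s x)) (S := ENNReal.ofReal S)
    (A := ENNReal.ofReal (3 ^ (((N : ℝ) + 2 * s) / 2))) (by fun_prop) (by fun_prop)
    (fun y z h => by
      rw [← ENNReal.ofReal_mul (by positivity)]
      exact ENNReal.ofReal_le_ofReal (fracEta_comparable hs0 y z h))
    (hS u hsol hst)
  have h2 : ENNReal.ofReal (∫ x, Real.exp ((2 * α + 1) * u x) * fracEta N s x) ≤ R := by
    refine (ofReal_integral_le fun x => mul_nonneg (Real.exp_pos _).le (hη0 x)).trans ?_
    simp_rw [ENNReal.ofReal_mul (Real.exp_pos _).le]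
    rw [hR, ENNReal.le_div_iff_mul_le (Or.inl hv0) (Or.inl hvt), mul_comm]
    exact h1
  have h3 := (ENNReal.ofReal_le_iff_le_toReal hRt).1 h2
  linarith
end
end

section
/- Let N ≥ 1 and 0 < s < 1. Then there exists a constant C > 0 depending only on N and s such that for every y ∈ ℝ^N, ∫_0^∞ ∫_{ℝ^N} t (1+|x|²+t²)^{-(N+2s)/2 - 1} / (|x−y|²+t²)^{(N+2s)/2} dx dt ≤ C (1+|y|²)^{-(N+2s)/2}. -/
/-! Put `a = (N+2s)/2`, `A = 1+|x|²+t²`, `B = |x-y|²+t²` and `R = 1+|y|²`. The parallelogram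
inequality gives `R ≤ 2(A+B)`, hence `R^a ≤ 4^a (A^a + B^a)`, and so
`A^{-a-1} B^{-a} ≤ 4^a R^{-a} (A^{-1} B^{-a} + A^{-a-1})`. Since `A ≥ 1+t²` and `A ≥ |x|²+t²`,
the bracket is at most `(1+t²)^{-1} ((|x-y|²+t²)^{-a} + (|x|²+t²)^{-a})`.
By translation invariance and scaling, both terms have the same integral over `x`, namely a constant
times `t^{-2s}` (`integral_bump_kernel`); what remains is `∫₀^∞ t^{1-2s}/(1+t²) dt`, which is finite
for `0 < s < 1` (`integrableOn_time_factor`). -/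

open MeasureTheory Filter Set

noncomputable section

lemma kernel_split {a A B R : ℝ} (ha : 0 < a) (hA : 0 < A) (hB : 0 < B) (hR : 0 < R)
    (h : R ≤ 2 * (A + B)) :
    A ^ (-a - 1) / B ^ a ≤ 4 ^ a * R ^ (-a) * (A⁻¹ * B ^ (-a) + A ^ (-a - 1)) := by
  have key : R ^ a ≤ 4 ^ a * (A ^ a + B ^ a) := by
    have hA' := Real.rpow_pos_of_pos hA a
    have hB' := Real.rpow_pos_of_pos hB a
    rcases le_total A B with hAB | hAB
    · calc R ^ a ≤ (4 * B) ^ a := Real.rpow_le_rpow hR.le (by linarith) ha.le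
        _ = 4 ^ a * B ^ a := Real.mul_rpow (by norm_num) hB.le
        _ ≤ _ := by gcongr; linarith
    · calc R ^ a ≤ (4 * A) ^ a := Real.rpow_le_rpow hR.le (by linarith) ha.le
        _ = 4 ^ a * A ^ a := Real.mul_rpow (by norm_num) hA.le
        _ ≤ _ := by gcongr; linarith
  have hRa := Real.rpow_pos_of_pos hR a
  have hAa := Real.rpow_pos_of_pos hA a
  have hBa := Real.rpow_pos_of_pos hB a
  have e : A ^ (-a - 1) = (A ^ a)⁻¹ * A⁻¹ := by
    rw [Real.rpow_sub hA, Real.rpow_neg hA.le, Real.rpow_one, div_eq_mul_inv]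
  rw [e, Real.rpow_neg hR.le, Real.rpow_neg hB.le]
  calc (A ^ a)⁻¹ * A⁻¹ / B ^ a
      = R ^ a * ((R ^ a)⁻¹ * ((A ^ a)⁻¹ * A⁻¹ * (B ^ a)⁻¹)) := by field_simp
    _ ≤ (4 ^ a * (A ^ a + B ^ a)) * ((R ^ a)⁻¹ * ((A ^ a)⁻¹ * A⁻¹ * (B ^ a)⁻¹)) := by
        gcongr
    _ = _ := by field_simp

lemma bump_kernel_eq {N : ℕ} (a : ℝ) {t : ℝ} (ht : 0 < t) (x : ES N) :
    (‖x‖ ^ 2 + t ^ 2) ^ (-a) = t ^ (-(2 * a)) * (1 + ‖t⁻¹ • x‖ ^ 2) ^ (-a) := by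
  have e : ‖x‖ ^ 2 + t ^ 2 = t ^ 2 * (1 + ‖t⁻¹ • x‖ ^ 2) := by
    rw [norm_smul, Real.norm_of_nonneg (inv_pos.2 ht).le]
    field_simp
    ring
  rw [e, Real.mul_rpow (by positivity) (by positivity), ← Real.rpow_natCast t 2,
    ← Real.rpow_mul ht.le]
  congr 2
  push_cast
  ring

lemma integrable_bump_unit {N : ℕ} {a : ℝ} (ha : (N : ℝ) < 2 * a) :
    Integrable (fun x : ES N => (1 + ‖x‖ ^ 2) ^ (-a)) := by
  have := integrable_rpow_neg_one_add_norm_sq (E := ES N) (μ := volume) (r := 2 * a)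
    (by simpa using ha)
  convert this using 3
  ring

lemma integrable_bump_kernel {N : ℕ} {a : ℝ} (ha : (N : ℝ) < 2 * a) {t : ℝ} (ht : 0 < t) :
    Integrable (fun x : ES N => (‖x‖ ^ 2 + t ^ 2) ^ (-a)) := by
  simp_rw [bump_kernel_eq a ht]
  exact ((integrable_bump_unit ha).comp_smul (inv_ne_zero ht.ne')).const_mul _

lemma integral_bump_kernel {N : ℕ} (a : ℝ) {t : ℝ} (ht : 0 < t) :
    ∫ x : ES N, (‖x‖ ^ 2 + t ^ 2) ^ (-a) =
      t ^ ((N : ℝ) - 2 * a) * ∫ x : ES N, (1 + ‖x‖ ^ 2) ^ (-a) := by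
  simp_rw [bump_kernel_eq a ht]
  rw [integral_const_mul,
    Measure.integral_comp_inv_smul volume (fun x : ES N => (1 + ‖x‖ ^ 2) ^ (-a)),
    abs_of_nonneg (by positivity), finrank_euclideanSpace_fin, smul_eq_mul, ← mul_assoc,
    ← Real.rpow_natCast t N, ← Real.rpow_add ht]
  congr 2
  ring

lemma integrableOn_time_factor {s : ℝ} (hs0 : 0 < s) (hs1 : s < 1) :
    IntegrableOn (fun t : ℝ => t ^ (1 - 2 * s) / (1 + t ^ 2)) (Ioi 0) := by
  have hm : Measurable (fun t : ℝ => t ^ (1 - 2 * s) / (1 + t ^ 2)) := by fun_prop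
  rw [← Ioc_union_Ioi_eq_Ioi (zero_le_one (α := ℝ))]
  refine IntegrableOn.union ?_ ?_
  · have h : IntegrableOn (fun t : ℝ => t ^ (1 - 2 * s)) (Ioc 0 1) :=
      (intervalIntegrable_iff_integrableOn_Ioc_of_le zero_le_one).1
        (intervalIntegral.intervalIntegrable_rpow' (by linarith))
    refine Integrable.mono' h hm.aestronglyMeasurable ?_
    filter_upwards [ae_restrict_mem measurableSet_Ioc] with t ht
    have ht0 : 0 < t := ht.1
    rw [Real.norm_of_nonneg (by positivity)]
    exact div_le_self (by positivity) (by nlinarith)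
  · have h : IntegrableOn (fun t : ℝ => t ^ (-1 - 2 * s)) (Ioi 1) :=
      integrableOn_Ioi_rpow_of_lt (by linarith) one_pos
    refine Integrable.mono' h hm.aestronglyMeasurable ?_
    filter_upwards [ae_restrict_mem measurableSet_Ioi] with t ht
    have ht0 : 0 < t := one_pos.trans ht
    rw [Real.norm_of_nonneg (by positivity), div_le_iff₀ (by positivity)]
    have e : t ^ (1 - 2 * s) = t ^ (-1 - 2 * s) * t ^ 2 := by
      rw [← Real.rpow_natCast t 2, ← Real.rpow_add ht0]
      congr 1
      push_cast
      ring
    rw [e]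
    gcongr
    linarith

lemma kernel_pointwise {N : ℕ} {a : ℝ} (ha : 0 < a) (x y : ES N) {t : ℝ} (ht : 0 < t) :
    t * (1 + ‖x‖ ^ 2 + t ^ 2) ^ (-a - 1) / (‖x - y‖ ^ 2 + t ^ 2) ^ a ≤
      4 ^ a * (1 + ‖y‖ ^ 2) ^ (-a) * (t / (1 + t ^ 2)) *
        ((‖x - y‖ ^ 2 + t ^ 2) ^ (-a) + (‖x‖ ^ 2 + t ^ 2) ^ (-a)) := by
  have hy : 1 + ‖y‖ ^ 2 ≤ 2 * ((1 + ‖x‖ ^ 2 + t ^ 2) + (‖x - y‖ ^ 2 + t ^ 2)) := by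
    have h1 : ‖y‖ ≤ ‖x‖ + ‖x - y‖ := by
      simpa using norm_sub_le x (x - y)
    nlinarith [norm_nonneg y, norm_nonneg x, norm_nonneg (x - y), sq_nonneg (‖x‖ - ‖x - y‖)]
  have h := kernel_split ha (A := 1 + ‖x‖ ^ 2 + t ^ 2) (B := ‖x - y‖ ^ 2 + t ^ 2)
    (R := 1 + ‖y‖ ^ 2) (by positivity) (by positivity) (by positivity) hy
  have hinv : (1 + ‖x‖ ^ 2 + t ^ 2)⁻¹ ≤ (1 + t ^ 2)⁻¹ := by
    gcongr
    nlinarith [sq_nonneg ‖x‖]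
  have h2 : (1 + ‖x‖ ^ 2 + t ^ 2) ^ (-a - 1) ≤ (1 + t ^ 2)⁻¹ * (‖x‖ ^ 2 + t ^ 2) ^ (-a) := by
    rw [Real.rpow_sub (by positivity), Real.rpow_one, div_eq_inv_mul]
    have : (1 + ‖x‖ ^ 2 + t ^ 2) ^ (-a) ≤ (‖x‖ ^ 2 + t ^ 2) ^ (-a) :=
      Real.rpow_le_rpow_of_nonpos (by positivity) (by linarith) (by linarith)
    gcongr
  calc _ = t * ((1 + ‖x‖ ^ 2 + t ^ 2) ^ (-a - 1) / (‖x - y‖ ^ 2 + t ^ 2) ^ a) := by ring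
    _ ≤ t * (4 ^ a * (1 + ‖y‖ ^ 2) ^ (-a) * ((1 + t ^ 2)⁻¹ * (‖x - y‖ ^ 2 + t ^ 2) ^ (-a) +
          (1 + t ^ 2)⁻¹ * (‖x‖ ^ 2 + t ^ 2) ^ (-a))) := by
        refine mul_le_mul_of_nonneg_left (h.trans ?_) ht.le
        gcongr
    _ = _ := by ring

lemma kernel_inner {N : ℕ} {s : ℝ} (hs0 : 0 < s) (y : ES N) {t : ℝ} (ht : 0 < t) :
    ∫ x : ES N, t * (1 + ‖x‖ ^ 2 + t ^ 2) ^ (-(((N : ℝ) + 2 * s) / 2) - 1) /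
        (‖x - y‖ ^ 2 + t ^ 2) ^ (((N : ℝ) + 2 * s) / 2) ≤
      2 * 4 ^ (((N : ℝ) + 2 * s) / 2) * (1 + ‖y‖ ^ 2) ^ (-(((N : ℝ) + 2 * s) / 2)) *
        (∫ x : ES N, (1 + ‖x‖ ^ 2) ^ (-(((N : ℝ) + 2 * s) / 2))) *
        (t ^ (1 - 2 * s) / (1 + t ^ 2)) := by
  set a : ℝ := ((N : ℝ) + 2 * s) / 2 with hadef
  have ha : 0 < a := by positivity
  have hi := integrable_bump_kernel (N := N) (a := a) (by rw [hadef]; linarith) ht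
  have hi' := hi.comp_sub_right y
  refine (integral_mono_of_nonneg (Eventually.of_forall fun x => by positivity)
    ((hi'.add hi).const_mul (4 ^ a * (1 + ‖y‖ ^ 2) ^ (-a) * (t / (1 + t ^ 2))))
    (Eventually.of_forall fun x => kernel_pointwise ha x y ht)).trans_eq ?_
  have e : t ^ ((N : ℝ) - 2 * a) * t = t ^ (1 - 2 * s) := by
    rw [← Real.rpow_add_one ht.ne']
    congr 1
    rw [hadef]
    ring
  simp only [Pi.add_apply]
  rw [integral_const_mul, integral_add hi' hi,
    integral_sub_right_eq_self (fun x : ES N => (‖x‖ ^ 2 + t ^ 2) ^ (-a)) y,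
    integral_bump_kernel a ht, ← e]
  ring

/-- The kernel estimate
`∫_0^∞ ∫ t (1+|x|²+t²)^{-(N+2s)/2-1} / (|x-y|²+t²)^{(N+2s)/2} dx dt ≤ C η(y)`. -/
theorem kernel_estimate (N : ℕ) (hN : 1 ≤ N) (s : ℝ) (hs0 : 0 < s) (hs1 : s < 1) :
    ∃ C : ℝ, 0 < C ∧ ∀ y : ES N,
      (∫ t in Set.Ioi (0 : ℝ), ∫ x : ES N,
          t * (1 + ‖x‖ ^ 2 + t ^ 2) ^ (-(((N : ℝ) + 2 * s) / 2) - 1) /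
            (‖x - y‖ ^ 2 + t ^ 2) ^ (((N : ℝ) + 2 * s) / 2)) ≤
        C * (1 + ‖y‖ ^ 2) ^ (-(((N : ℝ) + 2 * s) / 2)) := by
  set a : ℝ := ((N : ℝ) + 2 * s) / 2 with hadef
  set K : ℝ := ∫ x : ES N, (1 + ‖x‖ ^ 2) ^ (-a) with hK
  set J : ℝ := ∫ t in Ioi (0 : ℝ), t ^ (1 - 2 * s) / (1 + t ^ 2) with hJ
  have hK0 : 0 ≤ K := integral_nonneg fun x => by positivity
  have hJ0 : 0 ≤ J := setIntegral_nonneg measurableSet_Ioi fun t ht => by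
    have : 0 < t := ht
    positivity
  refine ⟨2 * 4 ^ a * K * J + 1, by positivity, fun y => ?_⟩
  have h0 : 0 ≤ (1 + ‖y‖ ^ 2) ^ (-a) := by positivity
  calc _ ≤ ∫ t in Ioi (0 : ℝ), 2 * 4 ^ a * (1 + ‖y‖ ^ 2) ^ (-a) * K *
          (t ^ (1 - 2 * s) / (1 + t ^ 2)) := by
        refine integral_mono_of_nonneg ?_ ((integrableOn_time_factor hs0 hs1).const_mul _) ?_
        · filter_upwards [ae_restrict_mem measurableSet_Ioi] with t ht
          have : 0 < t := ht
          exact integral_nonneg fun x => by positivity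
        · filter_upwards [ae_restrict_mem measurableSet_Ioi] with t ht
          exact kernel_inner hs0 y ht
    _ = 2 * 4 ^ a * K * J * (1 + ‖y‖ ^ 2) ^ (-a) := by
        rw [integral_const_mul]
        ring
    _ ≤ _ := by linarith
end
end

section
/- Let N ≥ 1, 0 < s < 1, let φ ∈ C_c^∞(ℝ) satisfy φ = 1 on [-1,1] and φ = 0 outside [-2,2], and for R ≥ 1 set Φ_R(x,t) = φ(|(x,t)|/R) and ζ(x,t) = (1+|x|²+t²)^{-(N+2s)/4}. Then there exists C > 0, independent of R and y, such that for all y ∈ ℝ^N and R ≥ 1, ∫_0^∞ ∫_{ℝ^N} t ζ(x,t)² |∇Φ_R(x,t)|² / (|x−y|²+t²)^{(N+2s)/2} dx dt ≤ C R^{-2s} (1+|y|²)^{-(N+2s)/2}. -/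
/-! The gradient of the cutoff is `O(1/R)` and lives in the annulus `R ≤ |(x,t)| ≤ 2R`, where
`ζ² ≤ R^{-(N+2s)}`. With `K = (N+2s)/2` the integrand is therefore at most
`2 M² R^{-2-2K} t (|x-y|²+t²)^{-K}` on the cylinder `|x| ≤ 2R`, `0 < t ≤ 2R`, and zero for `t > 2R`
(`integrand_le`, `integrand_eq_zero`). Two regimes remain.

* If `|y| ≥ 4R`, then `|x-y| ≥ |y|/2` on the cylinder, so the kernel is comparable to `η(y)`, and
  the volume factor `R^{N+2}` leaves `R^{-2s} η(y)` (`inner_far`).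
* If `|y| < 4R`, the `x`-integral is extended to all of `ℝ^N`; by scaling it equals a constant times
  `t^{N-2K} = t^{-2s}` (`integral_kernel`), finite because `2K > N`. Since `s < 1`, the function
  `t^{1-2s}` is integrable at `0` and contributes `R^{2-2s}`, which leaves `R^{-2s} R^{-2K}`, and
  `R^{-2K}` is bounded by a constant times `η(y)` (`inner_near`).
-/

open MeasureTheory Filter Set

noncomputable section

/-! ### The gradient of the cutoff -/

lemma abs_sqrt_sub_le (a b t : ℝ) :
    |Real.sqrt (a ^ 2 + t ^ 2) - Real.sqrt (b ^ 2 + t ^ 2)| ≤ |a - b| := by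
  have key : ∀ a b : ℝ, Real.sqrt (a ^ 2 + t ^ 2) ≤ Real.sqrt (b ^ 2 + t ^ 2) + |a - b| := by
    intro a b
    rw [Real.sqrt_le_iff]
    refine ⟨by positivity, ?_⟩
    have h1 := Real.sq_sqrt (show 0 ≤ b ^ 2 + t ^ 2 by positivity)
    have h2 : |b| ≤ Real.sqrt (b ^ 2 + t ^ 2) := Real.abs_le_sqrt (by nlinarith [sq_nonneg t])
    have h3 : b * (a - b) ≤ |b| * |a - b| := by rw [← abs_mul]; exact le_abs_self _
    have h4 := mul_le_mul_of_nonneg_right h2 (abs_nonneg (a - b))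
    nlinarith [sq_abs (a - b)]
  rw [abs_le]
  have h1 := key a b
  have h2 := key b a
  rw [abs_sub_comm] at h2
  constructor <;> linarith

lemma gradSqr_nonneg (N : ℕ) (F : ES N → ℝ → ℝ) (x : ES N) (t : ℝ) : 0 ≤ gradSqr N F x t := by
  unfold gradSqr; positivity

/-- Both partial gradients are bounded by the Lipschitz constant `M / R`, because
`z ↦ √(|z|² + τ²)` and `τ ↦ √(|z|² + τ²)` are `1`-Lipschitz. -/
lemma gradSqr_cutoff_le (N : ℕ) {φ : ℝ → ℝ} {M : NNReal} (hM : LipschitzWith M φ) {R : ℝ}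
    (hR : 0 < R) (x : ES N) (t : ℝ) :
    gradSqr N (fun z τ => φ (Real.sqrt (‖z‖ ^ 2 + τ ^ 2) / R)) x t ≤ 2 * (M / R) ^ 2 := by
  have hφ : ∀ a b : ℝ, dist (φ (a / R)) (φ (b / R)) ≤ M / R * |a - b| := by
    intro a b
    refine (hM.dist_le_mul _ _).trans (le_of_eq ?_)
    rw [Real.dist_eq, ← sub_div, abs_div, abs_of_pos hR]
    ring
  have hMR : (0 : ℝ) ≤ M / R := by positivity
  have hx : LipschitzWith (M / R).toNNReal
      (fun z : ES N => φ (Real.sqrt (‖z‖ ^ 2 + t ^ 2) / R)) := by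
    refine LipschitzWith.of_dist_le_mul fun z w => ?_
    rw [Real.coe_toNNReal _ hMR]
    refine (hφ _ _).trans (mul_le_mul_of_nonneg_left ?_ hMR)
    refine (abs_sqrt_sub_le _ _ _).trans ?_
    rw [dist_eq_norm]
    exact abs_norm_sub_norm_le z w
  have ht : LipschitzWith (M / R).toNNReal
      (fun τ : ℝ => φ (Real.sqrt (‖x‖ ^ 2 + τ ^ 2) / R)) := by
    refine LipschitzWith.of_dist_le_mul fun z w => ?_
    rw [Real.coe_toNNReal _ hMR]
    refine (hφ _ _).trans (mul_le_mul_of_nonneg_left ?_ hMR)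
    rw [add_comm _ (z ^ 2), add_comm _ (w ^ 2), Real.dist_eq]
    exact abs_sqrt_sub_le _ _ _
  have h1 := norm_fderiv_le_of_lipschitz ℝ hx (x₀ := x)
  have h2 := norm_deriv_le_of_lipschitz ht (x₀ := t)
  rw [Real.coe_toNNReal _ hMR] at h1 h2
  unfold gradSqr
  have h3 := pow_le_pow_left₀ (norm_nonneg _) h1 2
  have h4 := pow_le_pow_left₀ (norm_nonneg _) h2 2
  rw [Real.norm_eq_abs, sq_abs] at h4
  linarith

lemma gradSqr_eq_zero_of_eventuallyEq (N : ℕ) (g : ℝ → ℝ) (c : ℝ) (U : Set ℝ) (hU : IsOpen U)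
    (hg : ∀ r ∈ U, g r = c) (x : ES N) (t : ℝ) (hx : ‖x‖ ^ 2 + t ^ 2 ∈ U) :
    gradSqr N (fun z τ => g (‖z‖ ^ 2 + τ ^ 2)) x t = 0 := by
  have h1 : (fun z : ES N => g (‖z‖ ^ 2 + t ^ 2)) =ᶠ[nhds x] fun _ => c := by
    have : Continuous fun z : ES N => ‖z‖ ^ 2 + t ^ 2 := by fun_prop
    filter_upwards [this.continuousAt.preimage_mem_nhds (hU.mem_nhds hx)] with z hz
    exact hg _ hz
  have h2 : (fun τ : ℝ => g (‖x‖ ^ 2 + τ ^ 2)) =ᶠ[nhds t] fun _ => c := by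
    have : Continuous fun τ : ℝ => ‖x‖ ^ 2 + τ ^ 2 := by fun_prop
    filter_upwards [this.continuousAt.preimage_mem_nhds (hU.mem_nhds hx)] with z hz
    exact hg _ hz
  unfold gradSqr
  simp [h1.fderiv_eq, h2.deriv_eq]

lemma gradSqr_inside (N : ℕ) {φ : ℝ → ℝ} (hφ1 : ∀ t : ℝ, |t| ≤ 1 → φ t = 1) {R : ℝ}
    (hR : 0 < R) (x : ES N) (t : ℝ) (h : ‖x‖ ^ 2 + t ^ 2 < R ^ 2) :
    gradSqr N (fun z τ => φ (Real.sqrt (‖z‖ ^ 2 + τ ^ 2) / R)) x t = 0 := by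
  refine gradSqr_eq_zero_of_eventuallyEq N (fun r => φ (Real.sqrt r / R)) 1 (Iio (R ^ 2))
    isOpen_Iio (fun r hr => hφ1 _ ?_) x t h
  rw [abs_of_nonneg (by positivity), div_le_one hR]
  exact Real.sqrt_le_iff.2 ⟨hR.le, (mem_Iio.1 hr).le⟩

lemma gradSqr_outside (N : ℕ) {φ : ℝ → ℝ} (hφ0 : ∀ t : ℝ, 2 < |t| → φ t = 0) {R : ℝ}
    (hR : 0 < R) (x : ES N) (t : ℝ) (h : (2 * R) ^ 2 < ‖x‖ ^ 2 + t ^ 2) :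
    gradSqr N (fun z τ => φ (Real.sqrt (‖z‖ ^ 2 + τ ^ 2) / R)) x t = 0 := by
  refine gradSqr_eq_zero_of_eventuallyEq N (fun r => φ (Real.sqrt r / R)) 0 (Ioi ((2 * R) ^ 2))
    isOpen_Ioi (fun r hr => hφ0 _ ?_) x t h
  rw [abs_of_nonneg (by positivity), lt_div_iff₀ hR]
  exact Real.lt_sqrt_of_sq_lt (mem_Ioi.1 hr)

/-! ### Pointwise bounds on the integrand -/

/-- The integrand of the cutoff kernel estimate. -/
def cutoffIntegrand (N : ℕ) (s : ℝ) (φ : ℝ → ℝ) (R : ℝ) (y : ES N) (t : ℝ) (x : ES N) : ℝ :=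
  t * csZeta N s x t ^ 2 *
    gradSqr N (fun z τ => φ (Real.sqrt (‖z‖ ^ 2 + τ ^ 2) / R)) x t /
    (‖x - y‖ ^ 2 + t ^ 2) ^ (((N : ℝ) + 2 * s) / 2)

lemma integrand_nonneg (N : ℕ) (s : ℝ) (φ : ℝ → ℝ) (R : ℝ) (y : ES N) {t : ℝ} (ht : 0 < t)
    (x : ES N) : 0 ≤ cutoffIntegrand N s φ R y t x := by
  have := gradSqr_nonneg N (fun z τ => φ (Real.sqrt (‖z‖ ^ 2 + τ ^ 2) / R)) x t
  unfold cutoffIntegrand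
  positivity

lemma integrand_eq_zero (N : ℕ) (s : ℝ) {φ : ℝ → ℝ} (hφ0 : ∀ t : ℝ, 2 < |t| → φ t = 0) {R : ℝ}
    (hR : 0 < R) (y : ES N) (t : ℝ) (x : ES N) (h : (2 * R) ^ 2 < ‖x‖ ^ 2 + t ^ 2) :
    cutoffIntegrand N s φ R y t x = 0 := by
  simp [cutoffIntegrand, gradSqr_outside N hφ0 hR x t h]

/-- On the support of the gradient `1 + |x|² + t² ≥ R²`, so `ζ² ≤ R^{-(N+2s)}`. -/
lemma integrand_le (N : ℕ) {s : ℝ} (hs0 : 0 < s) {φ : ℝ → ℝ} {M : NNReal}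
    (hM : LipschitzWith M φ) (hφ1 : ∀ t : ℝ, |t| ≤ 1 → φ t = 1) {R : ℝ} (hR : 0 < R) (y : ES N)
    {t : ℝ} (ht : 0 < t) (x : ES N) :
    cutoffIntegrand N s φ R y t x ≤
      2 * (M : ℝ) ^ 2 * R ^ (-2 - ((N : ℝ) + 2 * s)) * t *
        (‖x - y‖ ^ 2 + t ^ 2) ^ (-(((N : ℝ) + 2 * s) / 2)) := by
  have hQ : 0 < ‖x - y‖ ^ 2 + t ^ 2 := by positivity
  rcases lt_or_ge (‖x‖ ^ 2 + t ^ 2) (R ^ 2) with h | h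
  · have : cutoffIntegrand N s φ R y t x = 0 := by
      simp [cutoffIntegrand, gradSqr_inside N hφ1 hR x t h]
    rw [this]; positivity
  have hG := gradSqr_cutoff_le N hM hR x t
  have hZ : csZeta N s x t ^ 2 ≤ R ^ (-((N : ℝ) + 2 * s)) := by
    have hpos : 0 < 1 + ‖x‖ ^ 2 + t ^ 2 := by positivity
    unfold csZeta
    rw [← Real.rpow_natCast, ← Real.rpow_mul hpos.le]
    have : R ^ (-((N : ℝ) + 2 * s)) = (R ^ 2) ^ (-(((N : ℝ) + 2 * s) / 2)) := by
      rw [← Real.rpow_natCast, ← Real.rpow_mul hR.le]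
      congr 1; push_cast; ring
    rw [this]
    have e : -(((N : ℝ) + 2 * s) / 4) * ((2 : ℕ) : ℝ) = -(((N : ℝ) + 2 * s) / 2) := by
      push_cast; ring
    rw [e]
    refine Real.rpow_le_rpow_of_nonpos (by positivity) (by linarith) ?_
    have : (0 : ℝ) ≤ N := Nat.cast_nonneg N
    linarith
  have hsplit : R ^ (-2 - ((N : ℝ) + 2 * s)) = R ^ (-((N : ℝ) + 2 * s)) / R ^ 2 := by
    rw [show -2 - ((N : ℝ) + 2 * s) = -((N : ℝ) + 2 * s) - (2 : ℕ) by push_cast; ring,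
      Real.rpow_sub hR, Real.rpow_natCast]
  unfold cutoffIntegrand
  rw [Real.rpow_neg hQ.le, hsplit, div_eq_mul_inv _ ((‖x - y‖ ^ 2 + t ^ 2) ^ _)]
  refine mul_le_mul_of_nonneg_right ?_ (by positivity)
  calc _ ≤ t * R ^ (-((N : ℝ) + 2 * s)) * (2 * (M / R) ^ 2) := by
        refine mul_le_mul ?_ hG (gradSqr_nonneg _ _ _ _) (by positivity)
        exact mul_le_mul_of_nonneg_left hZ ht.le
    _ = _ := by rw [div_pow]; ring

/-! ### Scaling of the kernel -/

lemma kernel_scaling (N : ℕ) (K : ℝ) {t : ℝ} (ht : 0 < t) (z : ES N) :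
    (‖z‖ ^ 2 + t ^ 2) ^ (-K) = t ^ (-(2 * K)) * (1 + ‖t⁻¹ • z‖ ^ 2) ^ (-K) := by
  have h : ‖z‖ ^ 2 + t ^ 2 = t ^ 2 * (1 + ‖t⁻¹ • z‖ ^ 2) := by
    rw [norm_smul, norm_inv, Real.norm_of_nonneg ht.le]; field_simp; ring
  rw [h, Real.mul_rpow (by positivity) (by positivity), ← Real.rpow_natCast t 2,
    ← Real.rpow_mul ht.le]
  congr 2; push_cast; ring

lemma integrable_bracket (N : ℕ) {K : ℝ} (hK : (N : ℝ) < 2 * K) :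
    Integrable (fun z : ES N => (1 + ‖z‖ ^ 2) ^ (-K)) := by
  have h := integrable_rpow_neg_one_add_norm_sq (E := ES N) (μ := volume) (r := 2 * K)
    (by simpa using hK)
  simpa [neg_div] using h

lemma integrable_kernel_s18 (N : ℕ) {K : ℝ} (hK : (N : ℝ) < 2 * K) {t : ℝ} (ht : 0 < t) (y : ES N) :
    Integrable (fun x : ES N => (‖x - y‖ ^ 2 + t ^ 2) ^ (-K)) := by
  have h := ((integrable_bracket N hK).comp_smul (inv_ne_zero ht.ne')).const_mul (t ^ (-(2 * K)))
  refine Integrable.comp_sub_right (f := fun z : ES N => (‖z‖ ^ 2 + t ^ 2) ^ (-K)) ?_ y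
  simpa only [kernel_scaling N K ht] using h

lemma integral_kernel (N : ℕ) (K : ℝ) {t : ℝ} (ht : 0 < t) (y : ES N) :
    ∫ x : ES N, (‖x - y‖ ^ 2 + t ^ 2) ^ (-K) =
      t ^ ((N : ℝ) - 2 * K) * ∫ z : ES N, (1 + ‖z‖ ^ 2) ^ (-K) := by
  rw [integral_sub_right_eq_self (fun z : ES N => (‖z‖ ^ 2 + t ^ 2) ^ (-K)) y]
  simp_rw [kernel_scaling N K ht]
  rw [integral_const_mul,
    Measure.integral_comp_inv_smul_of_nonneg volume
      (fun z : ES N => (1 + ‖z‖ ^ 2) ^ (-K)) ht.le, smul_eq_mul, ← mul_assoc]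
  congr 1
  rw [finrank_euclideanSpace_fin, ← Real.rpow_natCast, ← Real.rpow_add ht]
  congr 1; ring

/-! ### Integration over the cylinder -/

/-- Reduces the `t`-integral to a power bound on `(0, T]`; measurability of `I` is not needed, since
the junk value `0` of a non-integrable `I` also satisfies the bound. -/
lemma outer_integral_le {I : ℝ → ℝ} {B p T : ℝ} (hp : -1 < p) (hT : 0 ≤ T)
    (h0 : ∀ t, 0 < t → 0 ≤ I t) (h1 : ∀ t, 0 < t → t ≤ T → I t ≤ B * t ^ p)
    (h2 : ∀ t, T < t → I t = 0) :
    ∫ t in Ioi (0 : ℝ), I t ≤ B * (T ^ (p + 1) / (p + 1)) := by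
  have hInt : IntegrableOn (fun t : ℝ => B * t ^ p) (Ioc 0 T) :=
    (((intervalIntegral.intervalIntegrable_rpow' hp (a := 0) (b := T)).1).const_mul B)
  have hval : ∫ t in Ioc 0 T, B * t ^ p = B * (T ^ (p + 1) / (p + 1)) := by
    rw [integral_const_mul, ← intervalIntegral.integral_of_le hT, integral_rpow (Or.inl hp),
      Real.zero_rpow (by linarith), sub_zero]
  rw [← hval, ← inter_eq_self_of_subset_right (Ioc_subset_Ioi_self : Ioc 0 T ⊆ Ioi 0),
    ← setIntegral_indicator measurableSet_Ioc]
  refine integral_mono_of_nonneg ?_ ((integrable_indicator_iff measurableSet_Ioc).2 hInt).restrict ?_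
  · filter_upwards [ae_restrict_mem measurableSet_Ioi] with t ht using h0 t ht
  · filter_upwards [ae_restrict_mem measurableSet_Ioi] with t ht
    rcases le_or_gt t T with h | h
    · rw [indicator_of_mem (show t ∈ Ioc 0 T from ⟨ht, h⟩)]
      exact h1 t ht h
    · rw [indicator_of_notMem (fun hh => not_lt.2 hh.2 h), h2 t h]

/-- For `|y| ≥ 4R` the pole of the kernel stays away from the cylinder, so the kernel is bounded
by a multiple of `η(y)` and only the volume of the ball of radius `2R` enters. -/
lemma inner_far (N : ℕ) {s : ℝ} (hs0 : 0 < s) {φ : ℝ → ℝ} {M : NNReal}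
    (hM : LipschitzWith M φ) (hφ1 : ∀ t : ℝ, |t| ≤ 1 → φ t = 1)
    (hφ0 : ∀ t : ℝ, 2 < |t| → φ t = 0) {R : ℝ} (hR : 1 ≤ R) (y : ES N) (hy : 4 * R ≤ ‖y‖)
    {t : ℝ} (ht : 0 < t) :
    ∫ x : ES N, cutoffIntegrand N s φ R y t x ≤
      (2 * (M : ℝ) ^ 2 * R ^ (-2 - ((N : ℝ) + 2 * s)) * (8 ^ (((N : ℝ) + 2 * s) / 2) *
        (1 + ‖y‖ ^ 2) ^ (-(((N : ℝ) + 2 * s) / 2))) *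
        ((2 * R) ^ N * volume.real (Metric.ball (0 : ES N) 1))) * t := by
  have hR0 : 0 < R := by linarith
  have hN0 : (0 : ℝ) ≤ N := Nat.cast_nonneg N
  set K := ((N : ℝ) + 2 * s) / 2 with hK
  set D : ℝ := 2 * (M : ℝ) ^ 2 * R ^ (-2 - ((N : ℝ) + 2 * s)) * t *
    (8 ^ K * (1 + ‖y‖ ^ 2) ^ (-K)) with hD
  have hDint : Integrable ((Metric.closedBall (0 : ES N) (2 * R)).indicator fun _ => D) := by
    rw [integrable_indicator_iff Metric.isClosed_closedBall.measurableSet]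
    exact integrableOn_const measure_closedBall_lt_top.ne
  have hle : ∫ x : ES N, cutoffIntegrand N s φ R y t x ≤
      ∫ x : ES N, (Metric.closedBall (0 : ES N) (2 * R)).indicator (fun _ => D) x := by
    refine integral_mono_of_nonneg
      (Eventually.of_forall fun x => integrand_nonneg N s φ R y ht x) hDint
      (Eventually.of_forall fun x => ?_)
    by_cases hx : x ∈ Metric.closedBall (0 : ES N) (2 * R)
    · rw [indicator_of_mem hx]
      refine (integrand_le N hs0 hM hφ1 hR0 y ht x).trans ?_
      rw [hD]
      refine mul_le_mul_of_nonneg_left ?_ (by positivity)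
      rw [mem_closedBall_zero_iff] at hx
      have h1 : ‖y‖ / 2 ≤ ‖x - y‖ := by
        have := norm_sub_norm_le y x
        rw [norm_sub_rev] at this
        linarith
      -- `|y| ≥ 4R ≥ 4` gives `1 + |y|² ≤ 2|y|² ≤ 8|x-y|²`.
      have h2 : (1 + ‖y‖ ^ 2) / 8 ≤ ‖x - y‖ ^ 2 + t ^ 2 := by nlinarith [sq_nonneg t]
      calc (‖x - y‖ ^ 2 + t ^ 2) ^ (-K) ≤ ((1 + ‖y‖ ^ 2) / 8) ^ (-K) :=
            Real.rpow_le_rpow_of_nonpos (by positivity) h2 (by rw [hK]; linarith)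
        _ = 8 ^ K * (1 + ‖y‖ ^ 2) ^ (-K) := by
            rw [Real.div_rpow (by positivity) (by norm_num), Real.rpow_neg (by norm_num : (0 : ℝ) ≤ 8)]
            field_simp
    · rw [indicator_of_notMem hx]
      refine (integrand_eq_zero N s hφ0 hR0 y t x ?_).le
      rw [mem_closedBall_zero_iff, not_le] at hx
      nlinarith
  refine hle.trans (le_of_eq ?_)
  rw [integral_indicator Metric.isClosed_closedBall.measurableSet, setIntegral_const,
    Measure.addHaar_real_closedBall volume _ (by positivity), finrank_euclideanSpace_fin,
    smul_eq_mul, hD]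
  ring

/-- Extending the `x`-integral to all of `ℝ^N` costs the factor `t^{N-(N+2s)} = t^{-2s}`. -/
lemma inner_near (N : ℕ) {s : ℝ} (hs0 : 0 < s) {φ : ℝ → ℝ} {M : NNReal}
    (hM : LipschitzWith M φ) (hφ1 : ∀ t : ℝ, |t| ≤ 1 → φ t = 1) {R : ℝ} (hR : 0 < R) (y : ES N)
    {t : ℝ} (ht : 0 < t) :
    ∫ x : ES N, cutoffIntegrand N s φ R y t x ≤
      (2 * (M : ℝ) ^ 2 * R ^ (-2 - ((N : ℝ) + 2 * s)) *
        ∫ z : ES N, (1 + ‖z‖ ^ 2) ^ (-(((N : ℝ) + 2 * s) / 2))) * t ^ (1 - 2 * s) := by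
  have hInt := (integrable_kernel_s18 N (K := ((N : ℝ) + 2 * s) / 2) (by linarith) ht y).const_mul
    (2 * (M : ℝ) ^ 2 * R ^ (-2 - ((N : ℝ) + 2 * s)) * t)
  refine (integral_mono_of_nonneg
    (Eventually.of_forall fun x => integrand_nonneg N s φ R y ht x) hInt
    (Eventually.of_forall fun x => integrand_le N hs0 hM hφ1 hR y ht x)).trans (le_of_eq ?_)
  rw [integral_const_mul, integral_kernel N _ ht y]
  have : t ^ (1 - 2 * s) = t * t ^ ((N : ℝ) - 2 * (((N : ℝ) + 2 * s) / 2)) := by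
    rw [show 1 - 2 * s = 1 + ((N : ℝ) - 2 * (((N : ℝ) + 2 * s) / 2)) by ring,
      Real.rpow_add ht, Real.rpow_one]
  rw [this]; ring

/-- The cutoff kernel estimate
`∫_0^∞ ∫ t ζ² |∇Φ_R|² / (|x-y|²+t²)^{(N+2s)/2} dx dt ≤ C R^{-2s} η(y)`. -/
theorem cutoff_kernel_estimate (N : ℕ) (hN : 1 ≤ N) (s : ℝ) (hs0 : 0 < s)
    (hs1 : s < 1) (φ : ℝ → ℝ) (hφ : ContDiff ℝ (⊤ : ℕ∞) φ) (hφc : HasCompactSupport φ)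
    (hφ1 : ∀ t : ℝ, |t| ≤ 1 → φ t = 1) (hφ0 : ∀ t : ℝ, 2 < |t| → φ t = 0) :
    ∃ C : ℝ, 0 < C ∧ ∀ R : ℝ, 1 ≤ R → ∀ y : ES N,
      (∫ t in Set.Ioi (0 : ℝ), ∫ x : ES N,
          t * csZeta N s x t ^ 2 *
            gradSqr N (fun z τ => φ (Real.sqrt (‖z‖ ^ 2 + τ ^ 2) / R)) x t /
            (‖x - y‖ ^ 2 + t ^ 2) ^ (((N : ℝ) + 2 * s) / 2)) ≤
        C * R ^ (-(2 * s)) * (1 + ‖y‖ ^ 2) ^ (-(((N : ℝ) + 2 * s) / 2)) := by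
  obtain ⟨M, hM⟩ := hφ.lipschitzWith_of_hasCompactSupport hφc (by simp)
  set K := ((N : ℝ) + 2 * s) / 2 with hK
  set V := volume.real (Metric.ball (0 : ES N) 1) with hV
  set J := ∫ z : ES N, (1 + ‖z‖ ^ 2) ^ (-K) with hJ
  have hV0 : 0 ≤ V := measureReal_nonneg
  have hJ0 : 0 ≤ J := integral_nonneg fun z => by positivity
  have h1s : 0 < 1 - s := by linarith
  have hKpos : 0 < K := by positivity
  set C₁ : ℝ := 2 * (M : ℝ) ^ 2 * 8 ^ K * 2 ^ N * V * 2 with hC₁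
  set C₂ : ℝ := 2 * (M : ℝ) ^ 2 * J * (2 ^ (2 - 2 * s) / (2 - 2 * s)) * 17 ^ K with hC₂
  have hd : 0 < 2 - 2 * s := by linarith
  have hC₁0 : 0 ≤ C₁ := by positivity
  have hC₂0 : 0 ≤ C₂ := by positivity
  refine ⟨C₁ + C₂ + 1, by positivity, fun R hR y => ?_⟩
  have hR0 : 0 < R := by linarith
  change ∫ t in Ioi (0 : ℝ), ∫ x : ES N, cutoffIntegrand N s φ R y t x ≤ _
  have hpos : ∀ t : ℝ, 0 < t → 0 ≤ ∫ x : ES N, cutoffIntegrand N s φ R y t x :=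
    fun t ht => integral_nonneg fun x => integrand_nonneg N s φ R y ht x
  have hzero : ∀ t : ℝ, 2 * R < t → ∫ x : ES N, cutoffIntegrand N s φ R y t x = 0 := by
    intro t ht
    refine integral_eq_zero_of_ae (Eventually.of_forall fun x => ?_)
    refine integrand_eq_zero N s hφ0 hR0 y t x ?_
    nlinarith [sq_nonneg ‖x‖]
  have hη : 0 < R ^ (-(2 * s)) * (1 + ‖y‖ ^ 2) ^ (-K) := by positivity
  rcases le_or_gt (4 * R) ‖y‖ with hy | hy
  · have h := outer_integral_le (p := 1) (T := 2 * R) (by norm_num) (by positivity) hpos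
      (fun t ht _ => by
        rw [Real.rpow_one]
        exact inner_far N hs0 hM hφ1 hφ0 hR y hy ht) hzero
    refine h.trans (le_trans (le_of_eq ?_)
      (mul_le_mul_of_nonneg_right (show C₁ ≤ C₁ + C₂ + 1 by linarith) hη.le |>.trans_eq
        (mul_assoc _ _ _).symm))
    have e : R ^ (-(2 * s)) = R ^ (-2 - ((N : ℝ) + 2 * s)) * R ^ N * R ^ 2 := by
      rw [← Real.rpow_natCast R N, ← Real.rpow_natCast R 2, ← Real.rpow_add hR0,
        ← Real.rpow_add hR0]
      congr 1; push_cast; ring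
    rw [e, hC₁, show (1 : ℝ) + 1 = (2 : ℕ) by norm_num, Real.rpow_natCast, mul_pow, mul_pow]
    push_cast
    ring
  · have h := outer_integral_le (p := 1 - 2 * s) (T := 2 * R) (by linarith) (by positivity) hpos
      (fun t ht _ => inner_near N hs0 hM hφ1 hR0 y ht) hzero
    refine h.trans (le_trans ?_
      (mul_le_mul_of_nonneg_right (show C₂ ≤ C₁ + C₂ + 1 by linarith) hη.le |>.trans_eq
        (mul_assoc _ _ _).symm))
    -- Here `1 + |y|² ≤ 17R²`, so `R^{-2K} ≤ 17^K η(y)`.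
    have hRK : R ^ (-((N : ℝ) + 2 * s)) ≤ 17 ^ K * (1 + ‖y‖ ^ 2) ^ (-K) := by
      have e : R ^ (-((N : ℝ) + 2 * s)) = (R ^ 2) ^ (-K) := by
        rw [← Real.rpow_natCast, ← Real.rpow_mul hR0.le]
        congr 1; rw [hK]; push_cast; ring
      have h2 : (1 + ‖y‖ ^ 2) / 17 ≤ R ^ 2 := by nlinarith [norm_nonneg y]
      calc R ^ (-((N : ℝ) + 2 * s)) ≤ ((1 + ‖y‖ ^ 2) / 17) ^ (-K) := by
            rw [e]
            exact Real.rpow_le_rpow_of_nonpos (by positivity) h2 (by linarith)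
        _ = 17 ^ K * (1 + ‖y‖ ^ 2) ^ (-K) := by
            rw [Real.div_rpow (by positivity) (by norm_num),
              Real.rpow_neg (by norm_num : (0 : ℝ) ≤ 17)]
            field_simp
    have e : R ^ (-2 - ((N : ℝ) + 2 * s)) * R ^ (2 - 2 * s) =
        R ^ (-(2 * s)) * R ^ (-((N : ℝ) + 2 * s)) := by
      rw [← Real.rpow_add hR0, ← Real.rpow_add hR0]
      congr 1; ring
    rw [show 1 - 2 * s + 1 = 2 - 2 * s by ring, Real.mul_rpow (by norm_num) hR0.le]
    calc _ = 2 * (M : ℝ) ^ 2 * J * (2 ^ (2 - 2 * s) / (2 - 2 * s)) *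
          (R ^ (-2 - ((N : ℝ) + 2 * s)) * R ^ (2 - 2 * s)) := by rw [hJ]; ring
      _ = 2 * (M : ℝ) ^ 2 * J * (2 ^ (2 - 2 * s) / (2 - 2 * s)) * R ^ (-(2 * s)) *
          R ^ (-((N : ℝ) + 2 * s)) := by rw [e]; ring
      _ ≤ 2 * (M : ℝ) ^ 2 * J * (2 ^ (2 - 2 * s) / (2 - 2 * s)) * R ^ (-(2 * s)) *
          (17 ^ K * (1 + ‖y‖ ^ 2) ^ (-K)) :=
          mul_le_mul_of_nonneg_left hRK (by positivity)
      _ = _ := by rw [hC₂]; ring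
end
end
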